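/- arXiv:2505.07756 — 7 statements merged into one kernel-verified Lean document; each statement's English description precedes it below -/
import Mathlib

section
/- Let n ≥ 8. Suppose that every family 𝒢 of 3-element subsets of an (n−1)-element set that shatters no 3-element set satisfies |𝒢| ≤ C(n−2, 2) + 1. Then every family 𝒻 of 3-element subsets of [n] that shatters no 3-element subset satisfies |𝒻| ≤ C(n−1, 2) + 1. -/
/-- A family `𝒻` shatters a set `S` if every subset of `S` is the trace of some member of `𝒻`. -/
def Shatters (𝒻 : Finset (Finset ℕ)) (S : Finset ℕ) : Prop :=
  ∀ T ⊆ S, ∃ F ∈ 𝒻, F ∩ S = T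

/-- `{a, b, c}` is a member of `𝒻`. -/
def Edge (𝒻 : Finset (Finset ℕ)) (a b c : ℕ) : Prop := ({a, b, c} : Finset ℕ) ∈ 𝒻

/-- Every edge through `a` meets `{b, c}`. -/
def CoversLink (𝒻 : Finset (Finset ℕ)) (a b c : ℕ) : Prop :=
  ∀ p q, Edge 𝒻 a p q → p = b ∨ p = c ∨ q = b ∨ q = c

/-- Every edge meets `{a, b, c}`. -/
def MeetsAll (𝒻 : Finset (Finset ℕ)) (a b c : ℕ) : Prop :=
  ∀ p q r, Edge 𝒻 p q r →
    (p = a ∨ p = b ∨ p = c) ∨ (q = a ∨ q = b ∨ q = c) ∨ (r = a ∨ r = b ∨ r = c)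

/-- The properties of a 3-uniform family on `V` that violates the bound although the bound holds
on every smaller ground set. -/
structure IsCritical (n : ℕ) (V : Finset ℕ) (𝒻 : Finset (Finset ℕ)) : Prop where
  eight_le : 8 ≤ n
  card_ground : V.card = n
  subset_ground : ∀ F ∈ 𝒻, F ⊆ V
  uniform : ∀ F ∈ 𝒻, F.card = 3
  not_shatters : ∀ F ∈ 𝒻, ¬ Shatters 𝒻 F
  le_degree : ∀ v ∈ V, n - 1 ≤ (𝒻.filter (v ∈ ·)).card
  size : (n - 1).choose 2 + 2 ≤ 𝒻.card
  exists_codegree : ∀ a b c d, Edge 𝒻 a b c → Edge 𝒻 a b d → Edge 𝒻 a c d →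
    (𝒻.filter (a ∈ ·)).card ≤ n - 1 → ∃ z, z ≠ a ∧ Edge 𝒻 b c z

variable {n : ℕ} {V : Finset ℕ} {𝒻 : Finset (Finset ℕ)} {a b c d : ℕ}

lemma Edge.left_comm (h : Edge 𝒻 a b c) : Edge 𝒻 b a c := by
  unfold Edge at *; rwa [Finset.insert_comm]

lemma Edge.right_comm (h : Edge 𝒻 a b c) : Edge 𝒻 a c b := by
  unfold Edge at *; rwa [Finset.pair_comm]

lemma Edge.rotate (h : Edge 𝒻 a b c) : Edge 𝒻 b c a := h.left_comm.right_comm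

namespace IsCritical

lemma edge_ne (hC : IsCritical n V 𝒻) (h : Edge 𝒻 a b c) : a ≠ b ∧ a ≠ c ∧ b ≠ c := by
  have h3 := hC.uniform _ h
  have h2 : ∀ x y : ℕ, ({x, y} : Finset ℕ).card ≠ 3 := fun x y => by
    have := Finset.card_le_two (a := x) (b := y); omega
  refine ⟨?_, ?_, ?_⟩ <;> rintro rfl <;> simp_all

lemma edge_mem (hC : IsCritical n V 𝒻) (h : Edge 𝒻 a b c) : a ∈ V ∧ b ∈ V ∧ c ∈ V := by
  have := hC.subset_ground _ h
  simpa [Finset.insert_subset_iff] using this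

lemma exists_edge_of_mem (hC : IsCritical n V 𝒻) {F : Finset ℕ} (hF : F ∈ 𝒻) {v : ℕ} (hv : v ∈ F) :
    ∃ p q, Edge 𝒻 v p q ∧ F = {v, p, q} := by
  have h3 := hC.uniform F hF
  have h2 : (F.erase v).card = 2 := by rw [Finset.card_erase_of_mem hv, h3]
  obtain ⟨p, q, -, hpq⟩ := Finset.card_eq_two.1 h2
  have : F = {v, p, q} := by rw [← Finset.insert_erase hv, hpq]
  exact ⟨p, q, by unfold Edge; rwa [← this], this⟩

/-- An edge all of whose pairs lie in a second edge misses a singleton trace or the empty one. -/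
lemma covers_or_meetsAll (hC : IsCritical n V 𝒻) {x y z : ℕ} (h : Edge 𝒻 a b c)
    (hab : Edge 𝒻 a b x) (hx : x ≠ c) (hac : Edge 𝒻 a c y) (hy : y ≠ b)
    (hbc : Edge 𝒻 b c z) (hz : z ≠ a) :
    CoversLink 𝒻 a b c ∨ CoversLink 𝒻 b a c ∨ CoversLink 𝒻 c a b ∨ MeetsAll 𝒻 a b c := by
  by_contra hcon
  simp only [CoversLink, MeetsAll, not_or, not_forall] at hcon
  obtain ⟨⟨p1, q1, e1, f1⟩, ⟨p2, q2, e2, f2⟩, ⟨p3, q3, e3, f3⟩, ⟨p, q, r, e, f⟩⟩ := hcon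
  have n0 := hC.edge_ne h
  have na := hC.edge_ne hab
  have nb := hC.edge_ne hac
  have nc := hC.edge_ne hbc
  have n1 := hC.edge_ne e1
  have n2 := hC.edge_ne e2
  have n3 := hC.edge_ne e3
  refine hC.not_shatters _ h fun T hT => ?_
  by_cases ha : a ∈ T <;> by_cases hb : b ∈ T <;> by_cases hc : c ∈ T
  · exact ⟨_, h, by ext w; have := @hT w; grind⟩
  · exact ⟨_, hab, by ext w; have := @hT w; grind⟩
  · exact ⟨_, hac, by ext w; have := @hT w; grind⟩
  · exact ⟨_, e1, by ext w; have := @hT w; grind⟩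
  · exact ⟨_, hbc, by ext w; have := @hT w; grind⟩
  · exact ⟨_, e2, by ext w; have := @hT w; grind⟩
  · exact ⟨_, e3, by ext w; have := @hT w; grind⟩
  · exact ⟨_, e, by ext w; have := @hT w; grind⟩

open Classical in
/-- If every edge through `v` lies in `X` or has the form `{v, x, y}` with `y ∈ Y`, then `v` has
at least `n - 1 - |X|` such edges. -/
lemma le_card_star (hC : IsCritical n V 𝒻) {v x : ℕ} (hv : v ∈ V) (X : Finset (Finset ℕ)) (Y : Finset ℕ)
    (h : ∀ p q, Edge 𝒻 v p q → {v, p, q} ∈ X ∨ (p = x ∧ q ∈ Y) ∨ (q = x ∧ p ∈ Y)) :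
    n - 1 ≤ X.card + (Y.filter (Edge 𝒻 v x)).card := by
  have hs : 𝒻.filter (v ∈ ·) ⊆ X ∪ (Y.filter (Edge 𝒻 v x)).image fun y => {v, x, y} := by
    intro F hF
    obtain ⟨hF, hvF⟩ := Finset.mem_filter.1 hF
    obtain ⟨p, q, e, rfl⟩ := hC.exists_edge_of_mem hF hvF
    rw [Finset.mem_union, Finset.mem_image]
    rcases h p q e with h | ⟨rfl, hy⟩ | ⟨rfl, hy⟩
    · exact Or.inl h
    · exact Or.inr ⟨q, by simp [hy, e], rfl⟩
    · exact Or.inr ⟨p, by simp [hy, e.right_comm], by rw [Finset.pair_comm]⟩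
  have h1 := (hC.le_degree v hv).trans (Finset.card_le_card hs)
  have h2 := Finset.card_union_le X ((Y.filter (Edge 𝒻 v x)).image fun y => ({v, x, y} : Finset ℕ))
  have h3 := Finset.card_image_le (s := Y.filter (Edge 𝒻 v x)) (f := fun y => ({v, x, y} : Finset ℕ))
  omega

/-- If the link of `v` is a double star with centres `b`, `c` up to the edges in `X`, then the two
stars have two common leaves, or just one and then the double star is spanning. -/
lemma double_star (hC : IsCritical n V 𝒻) {v b c : ℕ} (hv : v ∈ V)
    (X : Finset (Finset ℕ)) (Y : Finset ℕ) (hXY : X.card + Y.card + 3 ≤ n)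
    (h : ∀ p q, Edge 𝒻 v p q → {v, p, q} ∈ X ∨ (p = b ∧ q = c) ∨ (p = c ∧ q = b) ∨
      ((p = b ∨ p = c) ∧ q ∈ Y) ∨ ((q = b ∨ q = c) ∧ p ∈ Y)) :
    (∃ w₁ ∈ Y, ∃ w₂ ∈ Y, w₁ ≠ w₂ ∧ Edge 𝒻 v b w₁ ∧ Edge 𝒻 v c w₁ ∧
      Edge 𝒻 v b w₂ ∧ Edge 𝒻 v c w₂) ∨
    (Edge 𝒻 v b c ∧ (∀ y ∈ Y, Edge 𝒻 v b y ∨ Edge 𝒻 v c y) ∧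
      ∃ w ∈ Y, Edge 𝒻 v b w ∧ Edge 𝒻 v c w ∧ ∀ y ∈ Y, Edge 𝒻 v b y → Edge 𝒻 v c y → y = w) := by
  classical
  set B := Y.filter (Edge 𝒻 v b) with hB
  set C := Y.filter (Edge 𝒻 v c) with hCC
  set K : Finset (Finset ℕ) := if Edge 𝒻 v b c then {{v, b, c}} else ∅ with hK
  have hs : 𝒻.filter (v ∈ ·) ⊆ X ∪ (K ∪ ((B.image fun y => {v, b, y}) ∪
      (C.image fun y => {v, c, y}))) := by
    intro F hF
    obtain ⟨hF, hvF⟩ := Finset.mem_filter.1 hF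
    obtain ⟨p, q, e, rfl⟩ := hC.exists_edge_of_mem hF hvF
    simp only [Finset.mem_union, Finset.mem_image]
    rcases h p q e with h | ⟨rfl, rfl⟩ | ⟨rfl, rfl⟩ | ⟨rfl | rfl, hy⟩ | ⟨rfl | rfl, hy⟩
    · exact Or.inl h
    · right; left; simp [hK, e]
    · right; left; simp [hK, e.right_comm, Finset.pair_comm]
    · exact Or.inr (Or.inr (Or.inl ⟨q, by simp [hB, hy, e], rfl⟩))
    · exact Or.inr (Or.inr (Or.inr ⟨q, by simp [hCC, hy, e], rfl⟩))
    · exact Or.inr (Or.inr (Or.inl ⟨p, by simp [hB, hy, e.right_comm], by rw [Finset.pair_comm]⟩))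
    · exact Or.inr (Or.inr (Or.inr ⟨p, by simp [hCC, hy, e.right_comm], by rw [Finset.pair_comm]⟩))
  have h1 := (hC.le_degree v hv).trans (Finset.card_le_card hs)
  have h2 := Finset.card_union_le X (K ∪ ((B.image fun y => ({v, b, y} : Finset ℕ)) ∪
      (C.image fun y => {v, c, y})))
  have h3 := Finset.card_union_le K ((B.image fun y => ({v, b, y} : Finset ℕ)) ∪
      (C.image fun y => {v, c, y}))
  have h4 := Finset.card_union_le (B.image fun y => ({v, b, y} : Finset ℕ))
      (C.image fun y => {v, c, y})
  have h5 := Finset.card_image_le (s := B) (f := fun y => ({v, b, y} : Finset ℕ))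
  have h6 := Finset.card_image_le (s := C) (f := fun y => ({v, c, y} : Finset ℕ))
  have h7 := Finset.card_union_add_card_inter B C
  have hBC : B ∪ C ⊆ Y := Finset.union_subset (Finset.filter_subset _ _) (Finset.filter_subset _ _)
  have h8 := Finset.card_le_card hBC
  have hK1 : K.card ≤ 1 := by rw [hK]; split_ifs <;> simp
  by_cases ht : 1 < (B ∩ C).card
  · left
    obtain ⟨w₁, m1, w₂, m2, hne⟩ := Finset.one_lt_card.1 ht
    simp only [hB, hCC, Finset.mem_inter, Finset.mem_filter] at m1 m2
    exact ⟨w₁, m1.1.1, w₂, m2.1.1, hne, m1.1.2, m1.2.2, m2.1.2, m2.2.2⟩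
  · right
    have hn := hC.eight_le
    refine ⟨?_, ?_, ?_⟩
    · by_contra hne
      have : K.card = 0 := by simp [hK, hne]
      omega
    · have hY : B ∪ C = Y := Finset.eq_of_subset_of_card_le hBC (by omega)
      intro y hy
      rw [← hY] at hy
      simpa [hB, hCC, hy, ← and_or_left, hY ▸ hy] using hy
    · obtain ⟨w, hw⟩ := Finset.card_eq_one.1 (show (B ∩ C).card = 1 by omega)
      have hw' : w ∈ B ∩ C := by simp [hw]
      simp only [hB, hCC, Finset.mem_inter, Finset.mem_filter] at hw'
      refine ⟨w, hw'.1.1, hw'.1.2, hw'.2.2, fun y hy e1 e2 => ?_⟩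
      have : y ∈ B ∩ C := by simp [hB, hCC, hy, e1, e2]
      simpa [hw] using this

end IsCritical

/-- The link of `a` is spanning and consists of the triangle `b c d` and pendant edges
at `b` and `c`. -/
structure IsBroom (V : Finset ℕ) (𝒻 : Finset (Finset ℕ)) (a b c d : ℕ) : Prop where
  abc : Edge 𝒻 a b c
  abd : Edge 𝒻 a b d
  acd : Edge 𝒻 a c d
  covers : CoversLink 𝒻 a b c
  leaf : ∀ z ∈ V, z ≠ a → z ≠ b → z ≠ c → z ≠ d →
    (Edge 𝒻 a b z ∧ ¬ Edge 𝒻 a c z) ∨ (¬ Edge 𝒻 a b z ∧ Edge 𝒻 a c z)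

namespace IsBroom

lemma symm (h : IsBroom V 𝒻 a b c d) : IsBroom V 𝒻 a c b d where
  abc := h.abc.right_comm
  abd := h.acd
  acd := h.abd
  covers p q e := by have := h.covers p q e; tauto
  leaf z hz h1 h2 h3 h4 := by have := h.leaf z hz h1 h3 h2 h4; tauto

lemma distinct (hC : IsCritical n V 𝒻) (h : IsBroom V 𝒻 a b c d) :
    a ≠ b ∧ a ≠ c ∧ a ≠ d ∧ b ≠ c ∧ b ≠ d ∧ c ≠ d := by
  have := hC.edge_ne h.abc
  have := hC.edge_ne h.abd
  have := hC.edge_ne h.acd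
  tauto

lemma card_sdiff (hC : IsCritical n V 𝒻) (h : IsBroom V 𝒻 a b c d) :
    (V \ {a, b, c, d}).card = n - 4 := by
  have hd := h.distinct hC
  have h4 : ({a, b, c, d} : Finset ℕ).card = 4 := by
    rw [Finset.card_insert_of_notMem, Finset.card_eq_three.2 ⟨b, c, d, by tauto⟩]
    simp; tauto
  have := hC.edge_mem h.abc
  have := hC.edge_mem h.acd
  rw [Finset.card_sdiff_of_subset (by simp [Finset.insert_subset_iff]; tauto), h4, hC.card_ground]

lemma exists_unique_leaf (h : IsBroom V 𝒻 a b c d) {z : ℕ}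
    (hz : z ∈ V \ {a, b, c, d}) :
    ∃ m, (m = b ∨ m = c) ∧ Edge 𝒻 a z m ∧ ∀ q, Edge 𝒻 a z q → q = m := by
  simp only [Finset.mem_sdiff, Finset.mem_insert, Finset.mem_singleton, not_or] at hz
  obtain ⟨hzV, h1, h2, h3, h4⟩ := hz
  rcases h.leaf z hzV h1 h2 h3 h4 with ⟨e, ne⟩ | ⟨ne, e⟩
  · refine ⟨b, Or.inl rfl, e.right_comm, fun q hq => ?_⟩
    rcases h.covers _ _ hq with r | r | r | r
    · exact absurd r h2
    · exact absurd r h3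
    · exact r
    · exact absurd (r ▸ hq.right_comm) ne
  · refine ⟨c, Or.inr rfl, e.right_comm, fun q hq => ?_⟩
    rcases h.covers _ _ hq with r | r | r | r
    · exact absurd r h2
    · exact absurd r h3
    · exact absurd (r ▸ hq.right_comm) ne
    · exact r

lemma degree_le (hC : IsCritical n V 𝒻) (h : IsBroom V 𝒻 a b c d) :
    (𝒻.filter (a ∈ ·)).card ≤ n - 1 := by
  classical
  have hs : 𝒻.filter (a ∈ ·) ⊆ ({{a, b, c}, {a, b, d}, {a, c, d}} : Finset (Finset ℕ)) ∪
      (V \ {a, b, c, d}).image fun z => if Edge 𝒻 a b z then {a, b, z} else {a, c, z} := by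
    intro F hF
    obtain ⟨hF, haF⟩ := Finset.mem_filter.1 hF
    obtain ⟨p, q, e, rfl⟩ := hC.exists_edge_of_mem hF haF
    have key : ∀ x y, Edge 𝒻 a x y → x = b ∨ x = c →
        ({a, x, y} : Finset ℕ) ∈ ({{a, b, c}, {a, b, d}, {a, c, d}} : Finset (Finset ℕ)) ∪
      (V \ {a, b, c, d}).image fun z => if Edge 𝒻 a b z then {a, b, z} else {a, c, z} := by
      intro x y e hx
      have ne := hC.edge_ne e
      have hm := hC.edge_mem e
      rw [Finset.mem_union, Finset.mem_image]
      by_cases hy : y ∈ ({b, c, d} : Finset ℕ)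
      · left
        simp only [Finset.mem_insert, Finset.mem_singleton] at hy ⊢
        rcases hx with rfl | rfl <;> rcases hy with rfl | rfl | rfl <;>
          first | exact absurd rfl ne.2.2 | simp [Finset.pair_comm]
      · right
        simp only [Finset.mem_insert, Finset.mem_singleton, not_or] at hy
        refine ⟨y, by simp [hm]; tauto, ?_⟩
        have := h.leaf y hm.2.2 ne.2.1.symm hy.1 hy.2.1 hy.2.2
        rcases hx with rfl | rfl
        · rw [if_pos e]
        · rw [if_neg (by tauto)]
    rcases h.covers p q e with r | r | r | r
    · exact key p q e (Or.inl r)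
    · exact key p q e (Or.inr r)
    · rw [Finset.pair_comm p q]; exact key q p e.right_comm (Or.inl r)
    · rw [Finset.pair_comm p q]; exact key q p e.right_comm (Or.inr r)
  have h1 := Finset.card_le_card hs
  have h2 := Finset.card_union_le ({{a, b, c}, {a, b, d}, {a, c, d}} : Finset (Finset ℕ))
      ((V \ {a, b, c, d}).image fun z => if Edge 𝒻 a b z then ({a, b, z} : Finset ℕ) else {a, c, z})
  have h3 := Finset.card_image_le (s := V \ {a, b, c, d})
      (f := fun z => if Edge 𝒻 a b z then ({a, b, z} : Finset ℕ) else {a, c, z})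
  have h4 : ({{a, b, c}, {a, b, d}, {a, c, d}} : Finset (Finset ℕ)).card ≤ 3 := Finset.card_le_three
  have h5 := h.card_sdiff hC
  have := hC.eight_le
  omega

lemma mem_rest {z : ℕ} : z ∈ V \ {a, b, c, d} ↔ z ∈ V ∧ z ≠ a ∧ z ≠ b ∧ z ≠ c ∧ z ≠ d := by simp

lemma double_star_of_meetsAll (hC : IsCritical n V 𝒻) (h : IsBroom V 𝒻 a b c d)
    (hM : MeetsAll 𝒻 a c d) {z : ℕ} (hz : z ∈ V \ {a, b, c, d}) :
    (∃ w₁ ∈ V \ {a, z, c, d}, ∃ w₂ ∈ V \ {a, z, c, d}, w₁ ≠ w₂ ∧ Edge 𝒻 z c w₁ ∧ Edge 𝒻 z d w₁ ∧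
      Edge 𝒻 z c w₂ ∧ Edge 𝒻 z d w₂) ∨
    (Edge 𝒻 z c d ∧ (∀ y ∈ V \ {a, z, c, d}, Edge 𝒻 z c y ∨ Edge 𝒻 z d y) ∧
      ∃ w ∈ V \ {a, z, c, d}, Edge 𝒻 z c w ∧ Edge 𝒻 z d w ∧
        ∀ y ∈ V \ {a, z, c, d}, Edge 𝒻 z c y → Edge 𝒻 z d y → y = w) := by
  obtain ⟨nab, nac, nad, nbc, nbd, ncd⟩ := h.distinct hC
  have hn := hC.eight_le
  have hmem := hC.edge_mem h.abc
  have hmem' := hC.edge_mem h.acd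
  obtain ⟨m, -, hm, hm'⟩ := h.exists_unique_leaf hz
  rw [mem_rest] at hz
  refine hC.double_star hz.1 {{z, a, m}} (V \ {a, z, c, d}) ?_ ?_
  · have h4 : ({a, z, c, d} : Finset ℕ).card = 4 := by
      rw [Finset.card_insert_of_notMem, Finset.card_eq_three.2 ⟨z, c, d, by tauto⟩]
      simp; tauto
    rw [Finset.card_sdiff_of_subset (by simp [Finset.insert_subset_iff]; tauto), h4, hC.card_ground]
    simp; omega
  · intro p q e
    have ne := hC.edge_ne e
    have me := hC.edge_mem e
    rcases eq_or_ne p a with rfl | hpa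
    · left; rw [hm' _ e.left_comm]; simp
    rcases eq_or_ne q a with rfl | hqa
    · left; rw [hm' _ e.rotate.rotate]; simp [Finset.pair_comm]
    right
    have := hM _ _ _ e
    simp only [Finset.mem_sdiff, Finset.mem_insert, Finset.mem_singleton, not_or]
    clear hm hm' hM
    grind

lemma common_leaf_of_meetsAll (hC : IsCritical n V 𝒻) (h : IsBroom V 𝒻 a b c d)
    (hM : MeetsAll 𝒻 a c d) {z w : ℕ} (hz : z ∈ V \ {a, b, c, d}) (hw : w ∈ V \ {a, z, c, d})
    (e1 : Edge 𝒻 z c w) (e2 : Edge 𝒻 z d w) : w = b := by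
  obtain ⟨nab, nac, nad, nbc, nbd, ncd⟩ := h.distinct hC
  have hdeg : ∀ z ∈ V \ {a, b, c, d}, ∀ w, ∃ w', w' ≠ w ∧ Edge 𝒻 z d w' := by
    intro z hz w
    rcases h.double_star_of_meetsAll hC hM hz with
      ⟨w₁, -, w₂, -, ne, -, e1, -, e2⟩ | ⟨e1, -, w₁, hw, -, e2, -⟩
    · by_cases hw : w₁ = w
      · exact ⟨w₂, hw ▸ ne.symm, e2⟩
      · exact ⟨w₁, hw, e1⟩
    · rw [mem_rest] at hw
      by_cases hw' : w₁ = w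
      · exact ⟨c, by rw [← hw']; tauto, e1.right_comm⟩
      · exact ⟨w₁, hw', e2⟩
  by_contra hwb
  have hwZ : w ∈ V \ {a, b, c, d} := by rw [mem_rest] at hw ⊢; tauto
  obtain ⟨x, hx, ex⟩ := hdeg z hz w
  obtain ⟨y, hy, ey⟩ := hdeg w hwZ z
  obtain ⟨m, hm, em, -⟩ := h.exists_unique_leaf hz
  obtain ⟨m', hm', em', -⟩ := h.exists_unique_leaf hwZ
  rw [mem_rest] at hz hwZ hw
  rcases hC.covers_or_meetsAll e2 ex hx e1.right_comm ncd ey.left_comm hy with r | r | r | r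
  · have := r _ _ em.left_comm; grind
  · have := r _ _ h.abd.rotate.rotate; grind
  · have := r _ _ em'.left_comm; grind
  · have := r _ _ _ h.abc; grind

lemma edges_of_meetsAll (hC : IsCritical n V 𝒻) (h : IsBroom V 𝒻 a b c d)
    (hM : MeetsAll 𝒻 a c d) {z : ℕ} (hz : z ∈ V \ {a, b, c, d}) :
    Edge 𝒻 z c d ∧ Edge 𝒻 z c b ∧ Edge 𝒻 z d b ∧
      ∀ y ∈ V \ {a, z, c, d}, Edge 𝒻 z c y ∨ Edge 𝒻 z d y := by
  have hcommon := fun {w} => h.common_leaf_of_meetsAll (w := w) hC hM hz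
  rcases h.double_star_of_meetsAll hC hM hz with
    ⟨w₁, m1, w₂, m2, ne, e1, e2, e3, e4⟩ | ⟨e1, e2, w₁, hw, e3, e4, -⟩
  · exact absurd ((hcommon m1 e1 e2).trans (hcommon m2 e3 e4).symm) ne
  · obtain rfl := hcommon hw e3 e4
    exact ⟨e1, e3, e4, e2⟩

lemma covers_or_meetsAll_left (hC : IsCritical n V 𝒻) (h : IsBroom V 𝒻 a b c d)
    (hM : MeetsAll 𝒻 a c d) {z : ℕ} (hz : z ∈ V \ {a, b, c, d}) :
    CoversLink 𝒻 z b c ∨ MeetsAll 𝒻 z b c := by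
  obtain ⟨nab, nac, nad, nbc, nbd, ncd⟩ := h.distinct hC
  obtain ⟨e1, e2, e3, -⟩ := h.edges_of_meetsAll hC hM hz
  rw [mem_rest] at hz
  rcases hC.covers_or_meetsAll e2.right_comm e3.right_comm ncd.symm e1 nbd.symm
    h.abc.rotate hz.2.1.symm with r | r | r | r
  · exact Or.inl r
  · have := r _ _ h.abd.left_comm; grind
  · have := r _ _ h.acd.left_comm; grind
  · exact Or.inr r

lemma covers_or_meetsAll_right (hC : IsCritical n V 𝒻) (h : IsBroom V 𝒻 a b c d)
    (hM : MeetsAll 𝒻 a c d) {z : ℕ} (hz : z ∈ V \ {a, b, c, d}) :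
    CoversLink 𝒻 z b d ∨ MeetsAll 𝒻 z b d := by
  obtain ⟨nab, nac, nad, nbc, nbd, ncd⟩ := h.distinct hC
  obtain ⟨e1, e2, e3, -⟩ := h.edges_of_meetsAll hC hM hz
  rw [mem_rest] at hz
  rcases hC.covers_or_meetsAll e3.right_comm e2.right_comm ncd e1.right_comm nbc.symm
    h.abd.rotate hz.2.1.symm with r | r | r | r
  · exact Or.inl r
  · have := r _ _ h.abc.left_comm; grind
  · have := r _ _ h.acd.rotate.rotate; grind
  · exact Or.inr r

/-- The edge `{a, c, d}` of a broom cannot meet all edges. -/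
lemma not_meetsAll (hC : IsCritical n V 𝒻) (h : IsBroom V 𝒻 a b c d) : ¬ MeetsAll 𝒻 a c d := by
  intro hM
  obtain ⟨nab, nac, nad, nbc, nbd, ncd⟩ := h.distinct hC
  have hn := hC.eight_le
  have hmem := hC.edge_mem h.abc
  have hmem' := hC.edge_mem h.acd
  obtain ⟨s, hs, hs4⟩ := Finset.exists_subset_card_eq
    (show 4 ≤ (V \ {a, b, c, d}).card by rw [h.card_sdiff hC]; omega)
  obtain ⟨z₁, z₂, z₃, z₄, n12, n13, n14, n23, n24, n34, rfl⟩ := Finset.card_eq_four.1 hs4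
  have m1 : z₁ ∈ V \ {a, b, c, d} := hs (by simp)
  have m2 : z₂ ∈ V \ {a, b, c, d} := hs (by simp)
  have m3 : z₃ ∈ V \ {a, b, c, d} := hs (by simp)
  have m4 : z₄ ∈ V \ {a, b, c, d} := hs (by simp)
  have hxor : ∀ z ∈ V \ {a, b, c, d}, ∀ w ∈ V \ {a, b, c, d}, z ≠ w →
      (Edge 𝒻 z c w ∨ Edge 𝒻 z d w) ∧ ¬ (Edge 𝒻 z c w ∧ Edge 𝒻 z d w) := by
    intro z hz w hw hzw
    have hw' : w ∈ V \ {a, z, c, d} := by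
      simp only [Finset.mem_sdiff, Finset.mem_insert, Finset.mem_singleton, not_or] at hw ⊢
      exact ⟨hw.1, hw.2.1, hzw.symm, hw.2.2.2⟩
    refine ⟨(h.edges_of_meetsAll hC hM hz).2.2.2 w hw', fun e => ?_⟩
    have := h.common_leaf_of_meetsAll hC hM hz hw' e.1 e.2
    rw [mem_rest] at hw
    tauto
  have hcov : ∀ z ∈ V \ {a, b, c, d}, ∀ w ∈ V \ {a, b, c, d}, ∀ x y, (x = c ∧ y = d ∨ x = d ∧ y = c) →
      CoversLink 𝒻 z b x → ¬ Edge 𝒻 z y w := by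
    intro z hz w hw x y hxy r e
    have := r _ _ e
    rw [mem_rest] at hz hw
    grind
  have hmeet : ∀ z ∈ V \ {a, b, c, d}, ∀ w ∈ V \ {a, b, c, d}, ∀ w' ∈ V \ {a, b, c, d},
      z ≠ w → z ≠ w' → ∀ x y, (x = c ∧ y = d ∨ x = d ∧ y = c) →
      MeetsAll 𝒻 z b x → ¬ Edge 𝒻 w y w' := by
    intro z hz w hw w' hw' h1 h2 x y hxy r e
    have := r _ _ _ e
    rw [mem_rest] at hz hw hw'
    grind
  have x12 := hxor _ m1 _ m2 n12
  have x21 := hxor _ m2 _ m1 n12.symm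
  have x13 := hxor _ m1 _ m3 n13
  have x14 := hxor _ m1 _ m4 n14
  have x23 := hxor _ m2 _ m3 n23
  have x24 := hxor _ m2 _ m4 n24
  have x34 := hxor _ m3 _ m4 n34
  have s12 : Edge 𝒻 z₁ c z₂ ↔ Edge 𝒻 z₂ c z₁ :=
    ⟨fun e => e.rotate.rotate.right_comm, fun e => e.rotate.rotate.right_comm⟩
  have A1 : ∀ x y, (x = c ∧ y = d ∨ x = d ∧ y = c) → CoversLink 𝒻 z₁ b x ∨ MeetsAll 𝒻 z₁ b x →
      (¬ Edge 𝒻 z₁ y z₂ ∧ ¬ Edge 𝒻 z₁ y z₃) ∨ (¬ Edge 𝒻 z₂ y z₃ ∧ ¬ Edge 𝒻 z₂ y z₄) := by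
    rintro x y hxy (r | r)
    · exact Or.inl ⟨hcov _ m1 _ m2 x y hxy r, hcov _ m1 _ m3 x y hxy r⟩
    · exact Or.inr ⟨hmeet _ m1 _ m2 _ m3 n12 n13 x y hxy r, hmeet _ m1 _ m2 _ m4 n12 n14 x y hxy r⟩
  have A2 : ∀ x y, (x = c ∧ y = d ∨ x = d ∧ y = c) → CoversLink 𝒻 z₂ b x ∨ MeetsAll 𝒻 z₂ b x →
      (¬ Edge 𝒻 z₂ y z₁ ∧ ¬ Edge 𝒻 z₂ y z₃) ∨ (¬ Edge 𝒻 z₁ y z₃ ∧ ¬ Edge 𝒻 z₁ y z₄) := by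
    rintro x y hxy (r | r)
    · exact Or.inl ⟨hcov _ m2 _ m1 x y hxy r, hcov _ m2 _ m3 x y hxy r⟩
    · exact Or.inr ⟨hmeet _ m2 _ m1 _ m3 n12.symm n23 x y hxy r,
        hmeet _ m2 _ m1 _ m4 n12.symm n24 x y hxy r⟩
  have B1 := A1 c d (by simp) (h.covers_or_meetsAll_left hC hM m1)
  have B2 := A1 d c (by simp) (h.covers_or_meetsAll_right hC hM m1)
  have B3 := A2 c d (by simp) (h.covers_or_meetsAll_left hC hM m2)
  have B4 := A2 d c (by simp) (h.covers_or_meetsAll_right hC hM m2)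
  clear hxor hcov hmeet A1 A2 hs m1 m2 m3 m4 hM h hC
  grind

end IsBroom

namespace IsCritical

lemma exists_edge_of_pair_mem (hC : IsCritical n V 𝒻) {F : Finset ℕ} (hF : F ∈ 𝒻) {p q : ℕ}
    (hp : p ∈ F) (hq : q ∈ F) (hpq : p ≠ q) : ∃ r, Edge 𝒻 p q r ∧ F = {p, q, r} := by
  obtain ⟨x, y, e, rfl⟩ := hC.exists_edge_of_mem hF hp
  simp only [Finset.mem_insert, Finset.mem_singleton, hpq.symm, false_or] at hq
  rcases hq with rfl | rfl
  · exact ⟨y, e, rfl⟩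
  · exact ⟨x, e.right_comm, by rw [Finset.pair_comm]⟩

/-- Few edges remain when each edge lies in a 4-set `K`, in one of the 3-element collections
`T z`, or is determined by a pair outside `K`. -/
lemma false_of_cover (hC : IsCritical n V 𝒻) {K : Finset ℕ} (hK : K.card ≤ 4)
    (hZ : (V \ K).card = n - 4) (T : ℕ → Finset (Finset ℕ)) (hT : ∀ z, (T z).card ≤ 3)
    (h : ∀ F ∈ 𝒻, F ⊆ K ∨ (∃ z ∈ V \ K, F ∈ T z) ∨
      ∃ p ∈ V \ K, ∃ q ∈ V \ K, ∃ r, p ≠ q ∧ F = {p, q, r} ∧ ∀ s, Edge 𝒻 p q s → s = r) :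
    False := by
  classical
  let g : Finset ℕ → Finset ℕ := fun P => if hP : ∃ F ∈ 𝒻, P ⊆ F then hP.choose else ∅
  have hs : 𝒻 ⊆ K.powersetCard 3 ∪ ((V \ K).biUnion T ∪ ((V \ K).powersetCard 2).image g) := by
    intro F hF
    simp only [Finset.mem_union, Finset.mem_powersetCard, Finset.mem_biUnion, Finset.mem_image]
    rcases h F hF with h | h | ⟨p, hp, q, hq, r, hpq, rfl, hr⟩
    · exact Or.inl ⟨h, hC.uniform F hF⟩
    · exact Or.inr (Or.inl h)
    · refine Or.inr (Or.inr ⟨{p, q}, ⟨?_, Finset.card_pair hpq⟩, ?_⟩)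
      · simp only [Finset.insert_subset_iff, Finset.singleton_subset_iff]
        exact ⟨hp, hq⟩
      · have hP : ∃ F ∈ 𝒻, {p, q} ⊆ F := ⟨_, hF, by simp [Finset.insert_subset_iff]⟩
        have hg : g {p, q} = hP.choose := dif_pos hP
        obtain ⟨h1, h2⟩ := hP.choose_spec
        rw [hg]
        obtain ⟨s, es, hs⟩ := hC.exists_edge_of_pair_mem h1 (h2 (by simp)) (h2 (by simp)) hpq
        rw [hs, hr s es]
  have h1 := Finset.card_le_card hs
  have h2 := Finset.card_union_le (K.powersetCard 3)
    ((V \ K).biUnion T ∪ ((V \ K).powersetCard 2).image g)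
  have h3 := Finset.card_union_le ((V \ K).biUnion T) (((V \ K).powersetCard 2).image g)
  have h4 := Finset.card_image_le (s := (V \ K).powersetCard 2) (f := g)
  have h5 : ((V \ K).biUnion T).card ≤ (V \ K).card * 3 :=
    Finset.card_biUnion_le_card_mul _ _ _ fun z _ => hT z
  rw [Finset.card_powersetCard] at h2 h4
  have h6 : K.card.choose 3 ≤ 4 := Nat.choose_le_choose 3 hK
  have h7 := hC.size
  obtain ⟨m, rfl⟩ := Nat.exists_eq_add_of_le' (show 4 ≤ n by have := hC.eight_le; omega)
  rw [hZ, Nat.add_sub_cancel] at h4 h5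
  have h8 : (m + 4 - 1).choose 2 = m.choose 2 + 3 * m + 3 := by
    show (m + 3).choose 2 = _
    have k1 := Nat.choose_succ_succ' (m + 2) 1
    have k2 := Nat.choose_succ_succ' (m + 1) 1
    have k3 := Nat.choose_succ_succ' m 1
    simp only [Nat.choose_one_right, Nat.reduceAdd, add_assoc] at k1 k2 k3
    omega
  omega

lemma edge_of_star (hC : IsCritical n V 𝒻) {v x : ℕ} (hv : v ∈ V) (X : Finset (Finset ℕ))
    (Y : Finset ℕ) (hXY : X.card + Y.card ≤ n - 1)
    (h : ∀ p q, Edge 𝒻 v p q → {v, p, q} ∈ X ∨ (p = x ∧ q ∈ Y) ∨ (q = x ∧ p ∈ Y)) :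
    ∀ y ∈ Y, Edge 𝒻 v x y := by
  classical
  have h1 := hC.le_card_star hv X Y h
  have h2 := Finset.eq_of_subset_of_card_le (Finset.filter_subset (Edge 𝒻 v x) Y)
    (by have := hC.eight_le; omega)
  intro y hy
  rw [← h2] at hy
  exact (Finset.mem_filter.1 hy).2

lemma false_of_star (hC : IsCritical n V 𝒻) {v x : ℕ} (hv : v ∈ V) (X : Finset (Finset ℕ))
    (Y : Finset ℕ) (hXY : X.card + Y.card < n - 1)
    (h : ∀ p q, Edge 𝒻 v p q → {v, p, q} ∈ X ∨ (p = x ∧ q ∈ Y) ∨ (q = x ∧ p ∈ Y)) : False := by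
  classical
  have h1 := hC.le_card_star hv X Y h
  have h2 := Finset.card_filter_le Y (Edge 𝒻 v x)
  omega

lemma card_sdiff_two (hC : IsCritical n V 𝒻) {x y : ℕ} (hx : x ∈ V) (hy : y ∈ V) (hxy : x ≠ y) :
    (V \ {x, y}).card = n - 2 := by
  rw [Finset.card_sdiff_of_subset (by simp [Finset.insert_subset_iff, *]), Finset.card_pair hxy,
    hC.card_ground]

lemma card_sdiff_three (hC : IsCritical n V 𝒻) {x y z : ℕ} (hx : x ∈ V) (hy : y ∈ V) (hz : z ∈ V)
    (hxy : x ≠ y) (hxz : x ≠ z) (hyz : y ≠ z) : (V \ {x, y, z}).card = n - 3 := by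
  rw [Finset.card_sdiff_of_subset (by simp [Finset.insert_subset_iff, *]),
    Finset.card_eq_three.2 ⟨x, y, z, hxy, hxz, hyz, rfl⟩, hC.card_ground]

end IsCritical

namespace IsBroom

lemma unique_of_rest (hC : IsCritical n V 𝒻) (h : IsBroom V 𝒻 a b c d) {p q r : ℕ}
    (hp : p ∈ V \ {a, b, c, d}) (hq : q ∈ V \ {a, b, c, d}) (hr : r ∈ V \ {a, b, c, d})
    (e : Edge 𝒻 p q r) :
    (∀ s, Edge 𝒻 p q s → s = r) ∨ (∀ s, Edge 𝒻 p r s → s = q) ∨ (∀ s, Edge 𝒻 q r s → s = p) := by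
  by_contra! hcon
  obtain ⟨⟨x, ex, hx⟩, ⟨y, ey, hy⟩, ⟨z, ez, hz⟩⟩ := hcon
  obtain ⟨mp, hmp, ep, -⟩ := h.exists_unique_leaf hp
  obtain ⟨mq, hmq, eq, -⟩ := h.exists_unique_leaf hq
  obtain ⟨mr, hmr, er, -⟩ := h.exists_unique_leaf hr
  rw [mem_rest] at hp hq hr
  rcases hC.covers_or_meetsAll e ex hx ey hy ez hz with k | k | k | k
  · have := k _ _ ep.left_comm; grind
  · have := k _ _ eq.left_comm; grind
  · have := k _ _ er.left_comm; grind
  · have := k _ _ _ h.abc; grind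

/-- Sorting the edges by their intersection with `V \ {a, b, c, d}`. -/
lemma false_of_classification (hC : IsCritical n V 𝒻) (h : IsBroom V 𝒻 a b c d)
    (T : ℕ → Finset (Finset ℕ)) (hT : ∀ z, (T z).card ≤ 3)
    (h1 : ∀ z ∈ V \ {a, b, c, d},
      (Edge 𝒻 z a b → {z, a, b} ∈ T z) ∧ (Edge 𝒻 z a c → {z, a, c} ∈ T z) ∧
      (Edge 𝒻 z a d → {z, a, d} ∈ T z) ∧ (Edge 𝒻 z b c → {z, b, c} ∈ T z) ∧
      (Edge 𝒻 z b d → {z, b, d} ∈ T z) ∧ (Edge 𝒻 z c d → {z, c, d} ∈ T z))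
    (h2 : ∀ z ∈ V \ {a, b, c, d}, ∀ w ∈ V \ {a, b, c, d}, ∀ p ∈ ({a, b, c, d} : Finset ℕ),
      Edge 𝒻 p z w → ∀ s, Edge 𝒻 z w s → s = p) : False := by
  refine hC.false_of_cover Finset.card_le_four (h.card_sdiff hC) T hT fun F hF => ?_
  by_cases hK : F ⊆ {a, b, c, d}
  · exact Or.inl hK
  right
  obtain ⟨z, hz, hzK⟩ := Finset.not_subset.1 hK
  obtain ⟨p, q, e, rfl⟩ := hC.exists_edge_of_mem hF hz
  have ne := hC.edge_ne e
  obtain ⟨mz, mp, mq⟩ := hC.edge_mem e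
  have hzZ : z ∈ V \ {a, b, c, d} := Finset.mem_sdiff.2 ⟨mz, hzK⟩
  by_cases hp : p ∈ ({a, b, c, d} : Finset ℕ) <;> by_cases hq : q ∈ ({a, b, c, d} : Finset ℕ)
  · refine Or.inl ⟨z, hzZ, ?_⟩
    obtain ⟨ab, ac, ad, bc, bd, cd⟩ := h1 z hzZ
    have e' := e.right_comm
    simp only [Finset.mem_insert, Finset.mem_singleton] at hp hq
    rcases hp with rfl | rfl | rfl | rfl <;> rcases hq with rfl | rfl | rfl | rfl <;>
      first
      | exact absurd rfl ne.2.2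
      | exact ab e
      | exact ac e
      | exact ad e
      | exact bc e
      | exact bd e
      | exact cd e
      | (rw [Finset.pair_comm]; first
        | exact ab e'
        | exact ac e'
        | exact ad e'
        | exact bc e'
        | exact bd e'
        | exact cd e')
  · have hqZ : q ∈ V \ {a, b, c, d} := Finset.mem_sdiff.2 ⟨mq, hq⟩
    exact Or.inr ⟨z, hzZ, q, hqZ, p, ne.2.1, by rw [Finset.pair_comm],
      h2 z hzZ q hqZ p hp e.left_comm⟩
  · have hpZ : p ∈ V \ {a, b, c, d} := Finset.mem_sdiff.2 ⟨mp, hp⟩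
    exact Or.inr ⟨z, hzZ, p, hpZ, q, ne.1, rfl, h2 z hzZ p hpZ q hq e.rotate.rotate⟩
  · have hqZ : q ∈ V \ {a, b, c, d} := Finset.mem_sdiff.2 ⟨mq, hq⟩
    have hpZ : p ∈ V \ {a, b, c, d} := Finset.mem_sdiff.2 ⟨mp, hp⟩
    rcases h.unique_of_rest hC hzZ hpZ hqZ e with k | k | k
    · exact Or.inr ⟨z, hzZ, p, hpZ, q, ne.1, rfl, k⟩
    · exact Or.inr ⟨z, hzZ, q, hqZ, p, ne.2.1, by rw [Finset.pair_comm], k⟩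
    · exact Or.inr ⟨p, hpZ, q, hqZ, z, ne.2.2, by ext; simp; tauto, k⟩

lemma exists_edge_bc (hC : IsCritical n V 𝒻) (h : IsBroom V 𝒻 a b c d) :
    ∃ z, z ≠ a ∧ Edge 𝒻 b c z :=
  hC.exists_codegree a b c d h.abc h.abd h.acd (h.degree_le hC)

lemma exists_edge_bd (hC : IsCritical n V 𝒻) (h : IsBroom V 𝒻 a b c d) :
    ∃ z, z ≠ a ∧ Edge 𝒻 b d z :=
  hC.exists_codegree a b d c h.abd h.abc h.acd.right_comm (h.degree_le hC)

lemma false_of_one_star (hC : IsCritical n V 𝒻) (h : IsBroom V 𝒻 a b c d)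
    (hs : ∀ z ∈ V \ {a, b, c, d}, ¬ Edge 𝒻 a c z) (hc : CoversLink 𝒻 c a d) : False := by
  obtain ⟨nab, nac, nad, nbc, nbd, ncd⟩ := h.distinct hC
  obtain ⟨ma, mb, mc⟩ := hC.edge_mem h.abc
  have md := (hC.edge_mem h.abd).2.2
  have hn := hC.eight_le
  have hab : ∀ z ∈ V \ {a, b, c, d}, Edge 𝒻 a b z := fun z hz => by
    have := hs z hz
    rw [mem_rest] at hz
    have := h.leaf z hz.1 hz.2.1 hz.2.2.1 hz.2.2.2.1 hz.2.2.2.2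
    grind
  have hca : ∀ q, Edge 𝒻 c a q → q = b ∨ q = d := fun q e => by
    by_contra hq
    have ne := hC.edge_ne e
    have me := hC.edge_mem e
    refine hs q (mem_rest.2 ?_) e.left_comm
    grind
  have hcd : ∀ y ∈ V \ {c, d}, Edge 𝒻 c d y := by
    refine hC.edge_of_star mc {{c, a, b}} _
      (by rw [hC.card_sdiff_two mc md ncd]; simp; omega) fun p q e => ?_
    have ne := hC.edge_ne e
    have me := hC.edge_mem e
    have k1 := hca q
    have k2 := hca p
    have k3 := e.right_comm
    have := hc _ _ e
    simp only [Finset.mem_singleton, Finset.mem_sdiff, Finset.mem_insert]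
    rcases this with rfl | rfl | rfl | rfl
    · rcases k1 e with rfl | rfl
      · exact Or.inl rfl
      · right; right; grind
    · right; left; grind
    · rcases k2 k3 with rfl | rfl
      · left; rw [Finset.pair_comm]
      · right; left; grind
    · right; right; grind
  have hcdz : ∀ z ∈ V \ {a, b, c, d}, Edge 𝒻 c d z := fun z hz => hcd z (by
    rw [mem_rest] at hz; simp; grind)
  refine h.false_of_classification hC (fun z => {{z, a, b}, {z, c, d}, {z, b, d}})
    (fun z => Finset.card_le_three) ?_ ?_
  · intro z hz
    refine ⟨fun e => by simp, fun e => (hs z hz e.rotate).elim, fun e => ?_, fun e => ?_,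
      fun e => by simp, fun e => by simp⟩ <;> rw [mem_rest] at hz
    · have := h.covers _ _ e.left_comm; grind
    · have := hc _ _ e.rotate.rotate; grind
  · intro z hz w hw p hp e s es
    have ez := hab z hz
    have ew := hab w hw
    have fz := hcdz z hz
    have fw := hcdz w hw
    rw [mem_rest] at hz hw
    have ne := hC.edge_ne e
    simp only [Finset.mem_insert, Finset.mem_singleton] at hp
    by_contra hsp
    rcases hp with rfl | rfl | rfl | rfl
    · have := h.covers _ _ e; grind
    · rcases hC.covers_or_meetsAll e ez.left_comm.right_comm hw.2.1.symm ew.left_comm.right_comm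
        hz.2.1.symm es hsp with k | k | k | k
      · have := k _ _ h.abc.left_comm; grind
      · have := k _ _ fz.rotate.rotate; grind
      · have := k _ _ fw.rotate.rotate; grind
      · have := k _ _ _ h.acd; grind
    · have := hc _ _ e; grind
    · rcases hC.covers_or_meetsAll e fz.left_comm.right_comm hw.2.2.2.1.symm
        fw.left_comm.right_comm hz.2.2.2.1.symm es hsp with k | k | k | k
      · have := k _ _ h.abd.rotate.rotate; grind
      · have := k _ _ ez.rotate.rotate; grind
      · have := k _ _ ew.rotate.rotate; grind
      · have := k _ _ _ h.abc; grind

/-- With leaves at both centres, `a` and `d` cover the link of `c`. -/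
lemma coversLink_of_two_stars (hC : IsCritical n V 𝒻) (h : IsBroom V 𝒻 a b c d) {z₀ z₁ : ℕ}
    (h0 : z₀ ∈ V \ {a, b, c, d}) (h1 : z₁ ∈ V \ {a, b, c, d}) (e0 : Edge 𝒻 a b z₀)
    (e1 : Edge 𝒻 a c z₁) : CoversLink 𝒻 c a d := by
  obtain ⟨nab, nac, nad, nbc, nbd, ncd⟩ := h.distinct hC
  obtain ⟨ma, mb, mc⟩ := hC.edge_mem h.abc
  have md := (hC.edge_mem h.abd).2.2
  have hn := hC.eight_le
  have n0 := mem_rest.1 h0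
  have n1 := mem_rest.1 h1
  have typed : ∀ b c z₀, IsBroom V 𝒻 a b c d → z₀ ∈ V \ {a, b, c, d} → Edge 𝒻 a b z₀ →
      CoversLink 𝒻 c a d ∨ CoversLink 𝒻 d a c := by
    intro b c z₀ h h0 e0
    obtain ⟨nab, nac, nad, nbc, nbd, ncd⟩ := h.distinct hC
    obtain ⟨z, hz, e⟩ := h.symm.exists_edge_bd hC
    rw [mem_rest] at h0
    rcases hC.covers_or_meetsAll h.acd h.abc.right_comm nbd h.abd.right_comm nbc e hz with
      k | k | k | k
    · have := k _ _ e0; grind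
    · exact Or.inl k
    · exact Or.inr k
    · exact absurd k (h.not_meetsAll hC)
  rcases typed b c z₀ h h0 e0 with k | hd
  · exact k
  exfalso
  have hda : ∀ q, Edge 𝒻 d a q → q = b ∨ q = c := fun q e => by
    have := h.covers _ _ e.left_comm
    grind
  have hdc : ∀ y ∈ V \ {d, c}, Edge 𝒻 d c y := by
    refine hC.edge_of_star md {{d, a, b}} _
      (by rw [hC.card_sdiff_two md mc ncd.symm]; simp; omega) fun p q e => ?_
    have ne := hC.edge_ne e
    have me := hC.edge_mem e
    have k1 := hda q
    have k2 := hda p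
    have k3 := e.right_comm
    have := hd _ _ e
    simp only [Finset.mem_singleton, Finset.mem_sdiff, Finset.mem_insert]
    rcases this with rfl | rfl | rfl | rfl
    · rcases k1 e with rfl | rfl
      · exact Or.inl rfl
      · right; right; grind
    · right; left; grind
    · rcases k2 k3 with rfl | rfl
      · left; rw [Finset.pair_comm]
      · right; left; grind
    · right; right; grind
  have hdz := hdc z₁ (by simp; grind)
  rcases typed c b z₁ h.symm (by rw [mem_rest] at *; grind) e1 with k | k
  · have hbz : ¬ Edge 𝒻 a b z₁ := fun e => by
      have := h.leaf z₁ n1.1 n1.2.1 n1.2.2.1 n1.2.2.2.1 n1.2.2.2.2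
      grind
    have hbd : ∀ q, Edge 𝒻 b d q → q = a ∨ q = c := fun q e => by
      have ne := hC.edge_ne e
      have := hd _ _ e.left_comm
      grind
    refine hC.false_of_star (x := a) mb {{b, d, c}} (V \ {a, b, z₁})
      (by rw [hC.card_sdiff_three ma mb n1.1 nab n1.2.1.symm n1.2.2.1.symm]; simp; omega)
      fun p q e => ?_
    have ne := hC.edge_ne e
    have me := hC.edge_mem e
    have k1 := hbd q
    have k2 := hbd p
    have k3 := e.right_comm
    have l1 : p = a → q ≠ z₁ := by rintro rfl rfl; exact hbz e.left_comm
    have l2 : q = a → p ≠ z₁ := by rintro rfl rfl; exact hbz e.rotate.rotate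
    have := k _ _ e
    simp only [Finset.mem_singleton, Finset.mem_sdiff, Finset.mem_insert]
    rcases this with rfl | rfl | rfl | rfl
    · right; left; grind
    · rcases k1 e with rfl | rfl
      · right; right; grind
      · exact Or.inl rfl
    · right; right; grind
    · rcases k2 k3 with rfl | rfl
      · right; left; grind
      · left; rw [Finset.pair_comm]
  · have := k _ _ hdz; grind

lemma false_of_two_stars (hC : IsCritical n V 𝒻) (h : IsBroom V 𝒻 a b c d) {z₀ z₁ : ℕ}
    (h0 : z₀ ∈ V \ {a, b, c, d}) (h1 : z₁ ∈ V \ {a, b, c, d}) (e0 : Edge 𝒻 a b z₀)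
    (e1 : Edge 𝒻 a c z₁) : False := by
  classical
  obtain ⟨nab, nac, nad, nbc, nbd, ncd⟩ := h.distinct hC
  have md := (hC.edge_mem h.abd).2.2
  have ma := (hC.edge_mem h.abd).1
  have hn := hC.eight_le
  have hc := h.coversLink_of_two_stars hC h0 h1 e0 e1
  have hb := h.symm.coversLink_of_two_stars hC (by rw [mem_rest] at *; grind)
    (by rw [mem_rest] at *; grind) e1 e0
  obtain ⟨x, hx, ex⟩ := h.exists_edge_bd hC
  obtain ⟨y, hy, ey⟩ := h.symm.exists_edge_bd hC
  have hbcd : Edge 𝒻 b c d := by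
    obtain ⟨z, hz, e⟩ := h.exists_edge_bc hC
    have := hb _ _ e
    have ne := hC.edge_ne e
    have : z = d := by grind
    exact this ▸ e
  have n0 := mem_rest.1 h0
  have n1 := mem_rest.1 h1
  have hd : CoversLink 𝒻 d b c := by
    rcases hC.covers_or_meetsAll hbcd h.abc.rotate nad h.abd.rotate nac h.acd.rotate nab with
      k | k | k | k
    · have := k _ _ e0.left_comm; grind
    · have := k _ _ e1.left_comm; grind
    · exact k
    · exfalso
      refine hC.false_of_star (x := d) n0.1 {{z₀, b, a}} (V \ {z₀, d, a})
        (by rw [hC.card_sdiff_three n0.1 md ma n0.2.2.2.2 n0.2.1 nad.symm]; simp; omega)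
        fun p q e => ?_
      have ne := hC.edge_ne e
      have me := hC.edge_mem e
      have l1 : ¬ Edge 𝒻 z₀ a d := fun e => by have := h.covers _ _ e.left_comm; grind
      have l2 : ¬ Edge 𝒻 z₀ d a := fun e => l1 e.right_comm
      have l3 : ∀ q, Edge 𝒻 z₀ b q → q = a ∨ q = d := fun q e => by
        have := hb _ _ e.left_comm; grind
      have l4 : ∀ q, Edge 𝒻 z₀ c q → q = a ∨ q = d := fun q e => by
        have := hc _ _ e.left_comm; grind
      have l5 : ¬ Edge 𝒻 z₀ c a := fun e => by
        have := h.leaf z₀ n0.1 n0.2.1 n0.2.2.1 n0.2.2.2.1 n0.2.2.2.2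
        have := e.rotate.rotate.right_comm
        grind
      have l6 : ∀ p q, Edge 𝒻 z₀ p q → p = b ∨ p = c ∨ p = d →
          ({z₀, p, q} : Finset ℕ) = {z₀, b, a} ∨ (p = d ∧ q ∈ V \ {z₀, d, a}) ∨
            (q = d ∧ p ∈ V \ {z₀, d, a}) := by
        intro p q e hp
        have ne := hC.edge_ne e
        have me := hC.edge_mem e
        simp only [Finset.mem_sdiff, Finset.mem_insert, Finset.mem_singleton]
        rcases hp with rfl | rfl | rfl
        · rcases l3 _ e with rfl | rfl
          · exact Or.inl rfl
          · right; right; grind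
        · rcases l4 _ e with rfl | rfl
          · grind
          · right; right; grind
        · right; left
          refine ⟨rfl, me.2.2, ?_⟩
          rintro (rfl | rfl | rfl) <;> grind
      rw [Finset.mem_singleton]
      rcases k _ _ _ e with k | k | k
      · grind
      · exact l6 p q e k
      · have := l6 q p e.right_comm k
        rw [Finset.pair_comm q p] at this
        grind
  refine h.false_of_classification hC
    (fun z => {{z, a, if Edge 𝒻 a b z then b else c}, {z, b, d}, {z, c, d}})
    (fun z => Finset.card_le_three) ?_ ?_
  · intro z hz
    rw [mem_rest] at hz
    have hl := h.leaf z hz.1 hz.2.1 hz.2.2.1 hz.2.2.2.1 hz.2.2.2.2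
    refine ⟨fun e => by simp [e.rotate], fun e => ?_, fun e => ?_, fun e => ?_,
      fun e => by simp, fun e => by simp⟩
    · have : ¬ Edge 𝒻 a b z := by have := e.rotate; grind
      simp [this]
    · have := h.covers _ _ e.left_comm; grind
    · have := hb _ _ e.left_comm; grind
  · intro z hz w hw p hp e s es
    rw [mem_rest] at hz hw
    exfalso
    simp only [Finset.mem_insert, Finset.mem_singleton] at hp
    rcases hp with rfl | rfl | rfl | rfl
    · have := h.covers _ _ e; grind
    · have := hb _ _ e; grind
    · have := hc _ _ e; grind
    · have := hd _ _ e; grind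

end IsBroom

/-- A critical family has no broom. -/
lemma IsCritical.not_isBroom (hC : IsCritical n V 𝒻) : ¬ IsBroom V 𝒻 a b c d := by
  have star : ∀ b c, IsBroom V 𝒻 a b c d → (∀ z ∈ V \ {a, b, c, d}, ¬ Edge 𝒻 a c z) → False := by
    intro b c h hs
    obtain ⟨nab, nac, nad, nbc, nbd, ncd⟩ := h.distinct hC
    have hab : ∀ z ∈ V \ {a, b, c, d}, Edge 𝒻 a b z := fun z hz => by
      have := hs z hz
      rw [IsBroom.mem_rest] at hz
      have := h.leaf z hz.1 hz.2.1 hz.2.2.1 hz.2.2.2.1 hz.2.2.2.2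
      grind
    have hd : ∀ z ∈ V \ {a, b, c, d}, ¬ Edge 𝒻 a d z := fun z hz e => by
      rw [IsBroom.mem_rest] at hz
      have := h.covers _ _ e; grind
    have h' : IsBroom V 𝒻 a b d c := by
      refine ⟨h.abd, h.abc, h.acd.right_comm, fun p q e => ?_, fun z hz k1 k2 k3 k4 => Or.inl
        ⟨hab z (by rw [IsBroom.mem_rest]; grind), hd z (by rw [IsBroom.mem_rest]; grind)⟩⟩
      have ne := hC.edge_ne e
      have me := hC.edge_mem e
      have := h.covers _ _ e
      have l1 : p = c → q = b ∨ q = d := by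
        rintro rfl
        by_contra hq
        exact hs q (by rw [IsBroom.mem_rest]; grind) e
      have l2 : q = c → p = b ∨ p = d := by
        rintro rfl
        by_contra hq
        exact hs p (by rw [IsBroom.mem_rest]; grind) e.right_comm
      grind
    have hZ : (V \ {a, b, c, d}).Nonempty := by
      rw [← Finset.card_pos, h.card_sdiff hC]
      have := hC.eight_le
      omega
    obtain ⟨z₀, h0⟩ := hZ
    have e0 := hab z₀ h0
    obtain ⟨z, hz, e⟩ := h.symm.exists_edge_bd hC
    have n0 := IsBroom.mem_rest.1 h0
    rcases hC.covers_or_meetsAll h.acd h.abc.right_comm nbd h.abd.right_comm nbc e hz with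
      k | k | k | k
    · have := k _ _ e0; grind
    · exact h.false_of_one_star hC hs k
    · exact h'.false_of_one_star hC (fun z hz => hd z (by rw [IsBroom.mem_rest] at *; grind)) k
    · exact h.not_meetsAll hC k
  intro h
  by_cases h1 : ∀ z ∈ V \ {a, b, c, d}, ¬ Edge 𝒻 a c z
  · exact star b c h h1
  by_cases h0 : ∀ z ∈ V \ {a, c, b, d}, ¬ Edge 𝒻 a b z
  · exact star c b h.symm h0
  push Not at h0 h1
  obtain ⟨z₀, m0, e0⟩ := h0
  obtain ⟨z₁, m1, e1⟩ := h1
  exact h.false_of_two_stars hC (by rw [IsBroom.mem_rest] at *; grind) m1 e0 e1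

namespace IsCritical

/-- If `x` and `y` cover the link of `v`, then they have two common neighbours in it. -/
lemma exists_two_common (hC : IsCritical n V 𝒻) {v x y : ℕ} (hv : v ∈ V) (hx : x ∈ V) (hy : y ∈ V)
    (hvx : v ≠ x) (hvy : v ≠ y) (hxy : x ≠ y) (h : CoversLink 𝒻 v x y) :
    ∃ w₁ w₂, w₁ ≠ w₂ ∧ Edge 𝒻 v x w₁ ∧ Edge 𝒻 v y w₁ ∧ Edge 𝒻 v x w₂ ∧ Edge 𝒻 v y w₂ := by
  have hn := hC.eight_le
  rcases hC.double_star (b := x) (c := y) hv ∅ (V \ {v, x, y})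
    (by rw [hC.card_sdiff_three hv hx hy hvx hvy hxy]; simp; omega) (fun p q e => by
      have ne := hC.edge_ne e
      have me := hC.edge_mem e
      have := h p q e
      simp only [Finset.mem_sdiff, Finset.mem_insert, Finset.mem_singleton]
      grind) with ⟨w₁, -, w₂, -, hne, e1, e2, e3, e4⟩ | ⟨e1, e2, w, hw, e3, e4, e5⟩
  · exact ⟨w₁, w₂, hne, e1, e2, e3, e4⟩
  · refine absurd (⟨e1, e3, e4, h, fun z hz h1 h2 h3 h4 => ?_⟩ : IsBroom V 𝒻 v x y w)
      hC.not_isBroom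
    have hz' : z ∈ V \ {v, x, y} := by simp [hz, h1, h2, h3]
    have := e2 z hz'
    have := e5 z hz'
    tauto

lemma mem_of_link_subset (hC : IsCritical n V 𝒻) {v : ℕ} (hv : v ∈ V) (X : Finset (Finset ℕ))
    (hX : X.card ≤ n - 1) (h : ∀ p q, Edge 𝒻 v p q → {v, p, q} ∈ X) : ∀ F ∈ X, F ∈ 𝒻 := by
  have hs : 𝒻.filter (v ∈ ·) ⊆ X := by
    intro F hF
    obtain ⟨hF, hvF⟩ := Finset.mem_filter.1 hF
    obtain ⟨p, q, e, rfl⟩ := hC.exists_edge_of_mem hF hvF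
    exact h p q e
  rw [← Finset.eq_of_subset_of_card_le hs (hX.trans (hC.le_degree v hv))]
  exact fun F hF => (Finset.mem_filter.1 hF).1

lemma exists_two_outside (hC : IsCritical n V 𝒻) (W : Finset ℕ) (hW : W.card + 2 ≤ n) :
    ∃ v ∈ V, ∃ w ∈ V, v ∉ W ∧ w ∉ W ∧ v ≠ w := by
  have := Finset.le_card_sdiff W V
  rw [hC.card_ground] at this
  obtain ⟨v, hv, w, hw, hvw⟩ := Finset.one_lt_card.1 (show 1 < (V \ W).card by omega)
  rw [Finset.mem_sdiff] at hv hw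
  exact ⟨v, hv.1, w, hw.1, hv.2, hw.2, hvw⟩

/-- Three sets sharing just one common point, and otherwise disjoint, do not all meet every edge. -/
lemma not_meetsAll_sunflower (hC : IsCritical n V 𝒻) {x a₁ b₁ a₂ b₂ a₃ b₃ : ℕ}
    (hx : x ∈ V) (h₁ : MeetsAll 𝒻 x a₁ b₁) (h₂ : MeetsAll 𝒻 x a₂ b₂) (h₃ : MeetsAll 𝒻 x a₃ b₃)
    (h12 : a₁ ≠ a₂ ∧ a₁ ≠ b₂ ∧ b₁ ≠ a₂ ∧ b₁ ≠ b₂) (h13 : a₁ ≠ a₃ ∧ a₁ ≠ b₃ ∧ b₁ ≠ a₃ ∧ b₁ ≠ b₃)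
    (h23 : a₂ ≠ a₃ ∧ a₂ ≠ b₃ ∧ b₂ ≠ a₃ ∧ b₂ ≠ b₃) : False := by
  have hn := hC.eight_le
  have hc : ({x, a₁, b₁, a₂, b₂, a₃, b₃} : Finset ℕ).card ≤ 7 :=
    (Finset.card_insert_le _ _).trans (Nat.succ_le_succ Finset.card_le_six)
  obtain ⟨v, hv, hvW⟩ : ∃ v ∈ V, v ∉ ({x, a₁, b₁, a₂, b₂, a₃, b₃} : Finset ℕ) :=
    Finset.exists_mem_notMem_of_card_lt_card (by rw [hC.card_ground]; omega)
  simp only [Finset.mem_insert, Finset.mem_singleton, not_or] at hvW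
  refine hC.false_of_star (x := x) hv ∅ (V \ {v, x})
    (by rw [hC.card_sdiff_two hv hx hvW.1]; simp; omega) fun p q e => ?_
  have ne := hC.edge_ne e
  have me := hC.edge_mem e
  have k1 := h₁ _ _ _ e
  have k2 := h₂ _ _ _ e
  have k3 := h₃ _ _ _ e
  simp only [Finset.mem_sdiff, Finset.mem_insert, Finset.mem_singleton]
  clear h₁ h₂ h₃
  grind

lemma not_meetsAll_triangle (hC : IsCritical n V 𝒻) {p q r a b c : ℕ}
    (h₁ : MeetsAll 𝒻 p q a) (h₂ : MeetsAll 𝒻 p r b) (h₃ : MeetsAll 𝒻 q r c)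
    (hpqr : p ≠ q ∧ p ≠ r ∧ q ≠ r) (habc : a ≠ b ∧ a ≠ c ∧ b ≠ c) (ha : a ≠ r) (hb : b ≠ q)
    (hc : c ≠ p) : False := by
  have hn := hC.eight_le
  obtain ⟨v, hv, hvW⟩ : ∃ v ∈ V, v ∉ ({p, q, r, a, b, c} : Finset ℕ) :=
    Finset.exists_mem_notMem_of_card_lt_card (by
      rw [hC.card_ground]
      have : ({p, q, r, a, b, c} : Finset ℕ).card ≤ 6 := Finset.card_le_six
      omega)
  simp only [Finset.mem_insert, Finset.mem_singleton, not_or] at hvW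
  refine hC.false_of_star (x := p) hv
    {{v, p, q}, {v, p, r}, {v, q, r}, {v, p, c}, {v, q, b}, {v, r, a}} ∅ ?_ fun s t e => ?_
  · refine lt_of_le_of_lt (add_le_add Finset.card_le_six le_rfl) ?_
    simp; omega
  left
  have ne := hC.edge_ne e
  have k1 := h₁ _ _ _ e
  have k2 := h₂ _ _ _ e
  have k3 := h₃ _ _ _ e
  have key : (s = p ∧ t = q ∨ s = q ∧ t = p) ∨ (s = p ∧ t = r ∨ s = r ∧ t = p) ∨
      (s = q ∧ t = r ∨ s = r ∧ t = q) ∨ (s = p ∧ t = c ∨ s = c ∧ t = p) ∨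
      (s = q ∧ t = b ∨ s = b ∧ t = q) ∨ (s = r ∧ t = a ∨ s = a ∧ t = r) := by
    clear h₁ h₂ h₃
    grind
  simp only [Finset.mem_insert, Finset.mem_singleton]
  rcases key with (⟨rfl, rfl⟩ | ⟨rfl, rfl⟩) | (⟨rfl, rfl⟩ | ⟨rfl, rfl⟩) | (⟨rfl, rfl⟩ | ⟨rfl, rfl⟩) |
    (⟨rfl, rfl⟩ | ⟨rfl, rfl⟩) | (⟨rfl, rfl⟩ | ⟨rfl, rfl⟩) | (⟨rfl, rfl⟩ | ⟨rfl, rfl⟩) <;>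
  simp [Finset.pair_comm]

lemma not_meetsAll_tent (hC : IsCritical n V 𝒻) {x y a b z : ℕ} (e₁ : Edge 𝒻 x y a)
    (h₁ : MeetsAll 𝒻 x y a) (h₂ : MeetsAll 𝒻 x y b) (h₃ : MeetsAll 𝒻 a b z)
    (hx : x ≠ y ∧ x ≠ a ∧ x ≠ b ∧ x ≠ z) (hy : y ≠ a ∧ y ≠ b ∧ y ≠ z) (hab : a ≠ b) : False := by
  have hn := hC.eight_le
  have all : ∀ v ∈ V, v ∉ ({x, y, a, b, z} : Finset ℕ) →
      Edge 𝒻 v a b ∧ Edge 𝒻 v x a ∧ Edge 𝒻 v x b ∧ Edge 𝒻 v y b := by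
    intro v hv hvW
    simp only [Finset.mem_insert, Finset.mem_singleton, not_or] at hvW
    have := hC.mem_of_link_subset hv
      {{v, a, b}, {v, x, a}, {v, x, b}, {v, x, z}, {v, y, a}, {v, y, b}, {v, y, z}}
      ((Finset.card_insert_le _ _).trans ((Nat.succ_le_succ Finset.card_le_six).trans (by omega)))
      fun s t e => by
        have ne := hC.edge_ne e
        have k1 := h₁ _ _ _ e
        have k2 := h₂ _ _ _ e
        have k3 := h₃ _ _ _ e
        have key : (s = a ∧ t = b ∨ s = b ∧ t = a) ∨ (s = x ∧ t = a ∨ s = a ∧ t = x) ∨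
            (s = x ∧ t = b ∨ s = b ∧ t = x) ∨ (s = x ∧ t = z ∨ s = z ∧ t = x) ∨
            (s = y ∧ t = a ∨ s = a ∧ t = y) ∨ (s = y ∧ t = b ∨ s = b ∧ t = y) ∨
            (s = y ∧ t = z ∨ s = z ∧ t = y) := by
          clear h₁ h₂ h₃
          grind
        simp only [Finset.mem_insert, Finset.mem_singleton]
        rcases key with (⟨rfl, rfl⟩ | ⟨rfl, rfl⟩) | (⟨rfl, rfl⟩ | ⟨rfl, rfl⟩) |
          (⟨rfl, rfl⟩ | ⟨rfl, rfl⟩) | (⟨rfl, rfl⟩ | ⟨rfl, rfl⟩) | (⟨rfl, rfl⟩ | ⟨rfl, rfl⟩) |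
          (⟨rfl, rfl⟩ | ⟨rfl, rfl⟩) | (⟨rfl, rfl⟩ | ⟨rfl, rfl⟩) <;>
        simp [Finset.pair_comm]
    exact ⟨this _ (by simp), this _ (by simp), this _ (by simp), this _ (by simp)⟩
  obtain ⟨v, hv, w, hw, hvW, hwW, hvw⟩ := hC.exists_two_outside {x, y, a, b, z} (by
    have : ({x, y, a, b, z} : Finset ℕ).card ≤ 5 := Finset.card_le_five
    omega)
  obtain ⟨v1, v2, v3, v4⟩ := all v hv hvW
  obtain ⟨w1, w2, w3, w4⟩ := all w hw hwW
  simp only [Finset.mem_insert, Finset.mem_singleton, not_or] at hvW hwW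
  rcases hC.covers_or_meetsAll v2 v3 hab.symm v1 hx.2.2.1.symm e₁.right_comm (Ne.symm hvW.2.1) with
    k | k | k | k
  · have := k _ _ v4; grind
  · have := k _ _ w3.left_comm; grind
  · have := k _ _ w1.left_comm; grind
  · have := k _ _ _ w4; grind

lemma not_meetsAll_book (hC : IsCritical n V 𝒻) {x y a b c : ℕ} (ea : Edge 𝒻 x y a)
    (eb : Edge 𝒻 x y b) (ec : Edge 𝒻 x y c) (hb : MeetsAll 𝒻 x y b) (hc : MeetsAll 𝒻 x y c)
    (ha : MeetsAll 𝒻 x y a) (ha' : ¬ CoversLink 𝒻 a x y) (hab : a ≠ b) (hac : a ≠ c)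
    (hbc : b ≠ c) : False := by
  have hn := hC.eight_le
  have na := hC.edge_ne ea
  have nb := hC.edge_ne eb
  have nc := hC.edge_ne ec
  have ma := hC.edge_mem ea
  have habc : Edge 𝒻 a b c := by
    simp only [CoversLink, not_forall, not_or] at ha'
    obtain ⟨p, q, e, h1, h2, h3, h4⟩ := ha'
    have ne := hC.edge_ne e
    have k1 := hb _ _ _ e
    have k2 := hc _ _ _ e
    have : (p = b ∧ q = c) ∨ (p = c ∧ q = b) := by
      clear ha hb hc
      grind
    rcases this with ⟨rfl, rfl⟩ | ⟨rfl, rfl⟩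
    · exact e
    · exact e.right_comm
  have root : ∀ v ∈ V, v ∉ ({x, y, a, b, c} : Finset ℕ) →
      ∃ w₁ w₂, w₁ ≠ w₂ ∧ Edge 𝒻 v x w₁ ∧ Edge 𝒻 v y w₁ ∧ Edge 𝒻 v x w₂ ∧ Edge 𝒻 v y w₂ := by
    intro v hv hvW
    simp only [Finset.mem_insert, Finset.mem_singleton, not_or] at hvW
    refine hC.exists_two_common hv ma.1 ma.2.1 hvW.1 hvW.2.1 na.1 fun p q e => ?_
    have k1 := ha _ _ _ e
    have k2 := hb _ _ _ e
    have k3 := hc _ _ _ e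
    clear ha hb hc
    grind
  have other : ∀ v ∈ V, v ∉ ({x, y, a, b, c} : Finset ℕ) → ∀ p,
      ∃ w, w ≠ p ∧ Edge 𝒻 v x w ∧ Edge 𝒻 v y w := by
    intro v hv hvW p
    obtain ⟨w₁, w₂, h1, h2, h3, h4, h5⟩ := root v hv hvW
    rcases eq_or_ne w₁ p with rfl | h
    · exact ⟨w₂, h1.symm, h4, h5⟩
    · exact ⟨w₁, h, h2, h3⟩
  have inside : ∀ v ∈ V, v ∉ ({x, y, a, b, c} : Finset ℕ) → ∀ p, Edge 𝒻 v x p → Edge 𝒻 v y p →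
      p = a ∨ p = b ∨ p = c := by
    intro v hv hvW p e1 e2
    by_contra hp
    have ne1 := hC.edge_ne e1
    have ne2 := hC.edge_ne e2
    have hpV := (hC.edge_mem e1).2.2
    have hpW : p ∉ ({x, y, a, b, c} : Finset ℕ) := by
      simp only [Finset.mem_insert, Finset.mem_singleton]; tauto
    obtain ⟨w, hw, f1, f2⟩ := other v hv hvW p
    obtain ⟨u, hu, g1, g2⟩ := other p hpV hpW v
    simp only [Finset.mem_insert, Finset.mem_singleton, not_or] at hvW hpW
    have nf := hC.edge_ne f1
    have ng := hC.edge_ne g1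
    rcases hC.covers_or_meetsAll e1.left_comm f1.left_comm hw g1.left_comm hu e2.right_comm
      na.1.symm with k | k | k | k
    · have := k _ _ ea; grind
    · have := k _ _ f2; grind
    · have := k _ _ g2; grind
    · have := k _ _ _ habc; grind
  obtain ⟨v, hv, w, hw, hvW, hwW, hvw⟩ := hC.exists_two_outside {x, y, a, b, c} (by
    have : ({x, y, a, b, c} : Finset ℕ).card ≤ 5 := Finset.card_le_five
    omega)
  have key : ∀ j, Edge 𝒻 v x j → Edge 𝒻 v y j → Edge 𝒻 w x j → Edge 𝒻 w y j → False := by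
    intro j e1 e2 e3 e4
    obtain ⟨k, hk, f1, f2⟩ := other v hv hvW j
    obtain ⟨l, hl, g1, g2⟩ := other w hw hwW j
    have hj := inside v hv hvW j e1 e2
    have hk' := inside v hv hvW k f1 f2
    have hl' := inside w hw hwW l g1 g2
    simp only [Finset.mem_insert, Finset.mem_singleton, not_or] at hvW hwW
    have ej : Edge 𝒻 x y j := by rcases hj with rfl | rfl | rfl <;> assumption
    have ek : Edge 𝒻 x y k := by rcases hk' with rfl | rfl | rfl <;> assumption
    have nj := hC.edge_ne ej
    have nk := hC.edge_ne ek
    have nl := hC.edge_ne g1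
    rcases hC.covers_or_meetsAll e1.left_comm f1.left_comm hk ej.right_comm (Ne.symm hvW.2.1)
      e2.right_comm na.1.symm with k' | k' | k' | k'
    · have := k' _ _ ek; grind
    · have := k' _ _ f2; grind
    · have := k' _ _ e4.rotate.rotate; grind
    · have := k' _ _ _ g2; grind
  obtain ⟨v₁, v₂, hne, e1, e2, e3, e4⟩ := root v hv hvW
  obtain ⟨w₁, w₂, hne', f1, f2, f3, f4⟩ := root w hw hwW
  have i1 := inside v hv hvW _ e1 e2
  have i2 := inside v hv hvW _ e3 e4
  have i3 := inside w hw hwW _ f1 f2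
  have i4 := inside w hw hwW _ f3 f4
  have : v₁ = w₁ ∨ v₁ = w₂ ∨ v₂ = w₁ ∨ v₂ = w₂ := by clear * - hne hne' i1 i2 i3 i4; grind
  rcases this with rfl | rfl | rfl | rfl
  · exact key _ e1 e2 f1 f2
  · exact key _ e1 e2 f3 f4
  · exact key _ e3 e4 f1 f2
  · exact key _ e3 e4 f3 f4

end IsCritical

/-- The pair `{p, q}` lies in exactly one edge, the one completed by `r`. -/
def Owns (𝒻 : Finset (Finset ℕ)) (p q r : ℕ) : Prop :=
  Edge 𝒻 p q r ∧ ∀ s, Edge 𝒻 p q s → s = r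

lemma Owns.symm {p q r : ℕ} (h : Owns 𝒻 p q r) : Owns 𝒻 q p r :=
  ⟨h.1.left_comm, fun s e => h.2 s e.left_comm⟩

/-- An edge that meets all edges and in which no pair covers the link of the third vertex. -/
def IsBlocking (𝒻 : Finset (Finset ℕ)) (F : Finset ℕ) : Prop :=
  F ∈ 𝒻 ∧ ∀ a b c, F = {a, b, c} → MeetsAll 𝒻 a b c ∧ ¬ CoversLink 𝒻 a b c

namespace IsCritical

/-- If every edge through `v` avoiding `x` contains a leaf of the link of `v`, then the degree of
`v` is too small. -/
lemma exists_edge_without_leaf (hC : IsCritical n V 𝒻) {v x : ℕ} (hv : v ∈ V) (hx : x ∈ V)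
    (hvx : v ≠ x) : ∃ p q, Edge 𝒻 v p q ∧ p ≠ x ∧ q ≠ x ∧ ¬ Owns 𝒻 v p q ∧ ¬ Owns 𝒻 v q p := by
  classical
  by_contra! hcon
  let g : ℕ → Finset ℕ := fun w => if Edge 𝒻 v x w then {v, x, w} else
    if h : ∃ t, Edge 𝒻 v w t then {v, w, h.choose} else ∅
  have hs : 𝒻.filter (v ∈ ·) ⊆ (V \ {v, x}).image g := by
    intro F hF
    obtain ⟨hF, hvF⟩ := Finset.mem_filter.1 hF
    obtain ⟨p, q, e, rfl⟩ := hC.exists_edge_of_mem hF hvF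
    have ne := hC.edge_ne e
    obtain ⟨-, mp, mq⟩ := hC.edge_mem e
    have leaf : ∀ p q, p ∈ V → Edge 𝒻 v p q → p ≠ x → q ≠ x → Owns 𝒻 v p q →
        {v, p, q} ∈ (V \ {v, x}).image g := by
      intro p q mp e hp hq ho
      have ne := hC.edge_ne e
      refine Finset.mem_image.2 ⟨p, by simp [mp, hp, ne.1.symm], ?_⟩
      have h : ∃ t, Edge 𝒻 v p t := ⟨q, e⟩
      have hn : ¬ Edge 𝒻 v x p := fun e' => hq (ho.2 _ e'.right_comm).symm
      simp only [g, if_neg hn, dif_pos h]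
      rw [ho.2 _ h.choose_spec]
    rcases eq_or_ne p x with rfl | hp
    · exact Finset.mem_image.2 ⟨q, by simp [mq, ne.2.1.symm, ne.2.2.symm], by simp [g, e]⟩
    rcases eq_or_ne q x with rfl | hq
    · refine Finset.mem_image.2 ⟨p, by simp [mp, ne.1.symm, ne.2.2], ?_⟩
      simp only [g, if_pos e.right_comm]
      rw [Finset.pair_comm]
    by_cases ho : Owns 𝒻 v p q
    · exact leaf p q mp e hp hq ho
    · rw [Finset.pair_comm p q]
      exact leaf q p mq e.right_comm hq hp (hcon p q e hp hq ho)
  have h1 := (hC.le_degree v hv).trans ((Finset.card_le_card hs).trans Finset.card_image_le)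
  rw [hC.card_sdiff_two hv hx hvx] at h1
  have := hC.eight_le
  omega

/-- Configuration of three edges `{x, s, a}`, `{x, s, c}`, `{x, d, f}` meeting all edges: each
further vertex owns a pair that meets all three of them outside `x`. -/
lemma exists_owns_of_meetsAll (hC : IsCritical n V 𝒻) {x s a c d f v : ℕ}
    (e₁ : Edge 𝒻 x s a) (e₂ : Edge 𝒻 x s c) (e₃ : Edge 𝒻 x d f) (h₁ : MeetsAll 𝒻 x s a)
    (h₂ : MeetsAll 𝒻 x s c) (h₃ : MeetsAll 𝒻 x d f) (hac : a ≠ c) (hsd : s ≠ d) (hsf : s ≠ f)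
    (hv : v ∈ V) (hvW : v ∉ ({x, s, a, c, d, f} : Finset ℕ)) :
    Owns 𝒻 s d v ∨ Owns 𝒻 s f v ∨ (Owns 𝒻 a c v ∧ (a = d ∨ a = f ∨ c = d ∨ c = f)) := by
  have hn := hC.eight_le
  have n1 := hC.edge_ne e₁
  have n2 := hC.edge_ne e₂
  have n3 := hC.edge_ne e₃
  have mx := (hC.edge_mem e₁).1
  have avoid : ∀ v ∉ ({x, s, a, c, d, f} : Finset ℕ), ∀ p q, Edge 𝒻 v p q → p ≠ x → q ≠ x →
      (p = s ∧ q = d ∨ p = d ∧ q = s) ∨ (p = s ∧ q = f ∨ p = f ∧ q = s) ∨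
      ((p = a ∧ q = c ∨ p = c ∧ q = a) ∧ (a = d ∨ a = f ∨ c = d ∨ c = f)) := by
    intro v hvW p q e hp hq
    simp only [Finset.mem_insert, Finset.mem_singleton, not_or] at hvW
    have k1 := h₁ _ _ _ e
    have k2 := h₂ _ _ _ e
    have k3 := h₃ _ _ _ e
    clear h₁ h₂ h₃
    grind
  have many : ∀ v ∈ V, v ∉ ({x, s, a, c, d, f} : Finset ℕ) → ∀ P : Finset ℕ, P.card ≤ 3 →
      ∃ w ∉ P, Edge 𝒻 v x w := by
    classical
    intro v hv hvW P hP
    have hvx : v ≠ x := by rintro rfl; simp at hvW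
    have h3 : ({{v, s, d}, {v, s, f}, {v, a, c}} : Finset (Finset ℕ)).card ≤ 3 :=
      Finset.card_le_three
    have := hC.le_card_star (x := x) hv {{v, s, d}, {v, s, f}, {v, a, c}} (V \ {v, x})
      fun p q e => by
        have ne := hC.edge_ne e
        have me := hC.edge_mem e
        by_cases hp : p = x
        · right; left; simp only [Finset.mem_sdiff, Finset.mem_insert, Finset.mem_singleton]; grind
        by_cases hq : q = x
        · right; right; simp only [Finset.mem_sdiff, Finset.mem_insert, Finset.mem_singleton]; grind
        left
        rcases avoid v hvW p q e hp hq with (⟨rfl, rfl⟩ | ⟨rfl, rfl⟩) | (⟨rfl, rfl⟩ | ⟨rfl, rfl⟩) |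
          ⟨⟨rfl, rfl⟩ | ⟨rfl, rfl⟩, -⟩ <;> simp [Finset.pair_comm]
    obtain ⟨w, hw, hwP⟩ := Finset.exists_mem_notMem_of_card_lt_card
      (show P.card < ((V \ {v, x}).filter (Edge 𝒻 v x)).card by omega)
    exact ⟨w, hwP, (Finset.mem_filter.1 hw).2⟩
  have hvx : v ≠ x := by rintro rfl; simp at hvW
  obtain ⟨p, q, e, hp, hq, op, oq⟩ := hC.exists_edge_without_leaf hv mx hvx
  have ne := hC.edge_ne e
  have own : Owns 𝒻 p q v := by
    refine ⟨e.rotate, fun t et => ?_⟩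
    by_contra htv
    simp only [Owns, not_and, not_forall] at op oq
    obtain ⟨y, ey, hy⟩ := op e
    obtain ⟨z, ez, hz⟩ := oq e.right_comm
    obtain ⟨w, hw, hwW⟩ : ∃ w ∈ V, w ∉ (insert v {x, s, a, c, d, f} : Finset ℕ) :=
      Finset.exists_mem_notMem_of_card_lt_card (by
        rw [hC.card_ground]
        have : ({x, s, a, c, d, f} : Finset ℕ).card ≤ 6 := Finset.card_le_six
        have := Finset.card_insert_le v {x, s, a, c, d, f}
        omega)
    rw [Finset.mem_insert, not_or] at hwW
    obtain ⟨u, hu, eu⟩ := many v hv hvW {v, p, q} Finset.card_le_three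
    obtain ⟨t, ht, et'⟩ := many w hw hwW.2 {v, p, q} Finset.card_le_three
    have av := avoid v hvW p q e hp hq
    have m1 := h₁ _ _ _ e
    have m2 := h₂ _ _ _ e
    have m3 := h₃ _ _ _ e
    simp only [Finset.mem_insert, Finset.mem_singleton, not_or] at hu ht hvW hwW
    have link : ∀ p q, p ≠ x → q ≠ x → v ≠ p → v ≠ q → p ≠ q →
        ((p = s ∨ p = a) ∨ (q = s ∨ q = a)) → ((p = s ∨ p = c) ∨ (q = s ∨ q = c)) →
        ((p = d ∨ p = f) ∨ (q = d ∨ q = f)) → ¬ CoversLink 𝒻 p v q := by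
      intro p q hp hq hvp hvq hpq r1 r2 r3 k
      have : ∀ y z, Edge 𝒻 x y z → y ≠ q → z ≠ q → y ≠ v → z ≠ v → p = y ∨ p = z → False := by
        rintro y z e h1 h2 h3 h4 (rfl | rfl)
        · have := k _ _ e.left_comm; grind
        · have := k _ _ e.rotate.rotate; grind
      have l1 := this _ _ e₁
      have l2 := this _ _ e₂
      have l3 := this _ _ e₃
      clear * - l1 l2 l3 r1 r2 r3 hvW hac hsd hsf n1 n2 n3 hp hq hpq
      grind
    have cond1 : (p = s ∨ p = a) ∨ (q = s ∨ q = a) := by clear * - m1 hp hq hvW; grind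
    have cond2 : (p = s ∨ p = c) ∨ (q = s ∨ q = c) := by clear * - m2 hp hq hvW; grind
    have cond3 : (p = d ∨ p = f) ∨ (q = d ∨ q = f) := by clear * - m3 hp hq hvW; grind
    rcases hC.covers_or_meetsAll e ey hy ez hz et htv with k | k | k | k
    · have := k _ _ eu; clear * - this hp hq hu; grind
    · exact link p q hp hq ne.1 ne.2.1 ne.2.2 cond1 cond2 cond3 k
    · exact link q p hq hp ne.2.1 ne.1 ne.2.2.symm cond1.symm cond2.symm cond3.symm k
    · have km := k _ _ _ et'
      have hwpq : w ≠ p ∧ w ≠ q := by clear * - hwW cond1 cond2 cond3 av; grind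
      clear * - km hwpq hp hq ht hwW hvx
      grind
  rcases avoid v hvW p q e hp hq with (⟨rfl, rfl⟩ | ⟨rfl, rfl⟩) | (⟨rfl, rfl⟩ | ⟨rfl, rfl⟩) |
    ⟨⟨rfl, rfl⟩ | ⟨rfl, rfl⟩, hd⟩
  · exact Or.inl own
  · exact Or.inl own.symm
  · exact Or.inr (Or.inl own)
  · exact Or.inr (Or.inl own.symm)
  · exact Or.inr (Or.inr ⟨own, hd⟩)
  · exact Or.inr (Or.inr ⟨own.symm, hd⟩)

lemma not_meetsAll_kite (hC : IsCritical n V 𝒻) {x s a c d f : ℕ}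
    (e₁ : Edge 𝒻 x s a) (e₂ : Edge 𝒻 x s c) (e₃ : Edge 𝒻 x d f) (h₁ : MeetsAll 𝒻 x s a)
    (h₂ : MeetsAll 𝒻 x s c) (h₃ : MeetsAll 𝒻 x d f) (hac : a ≠ c) (hsd : s ≠ d) (hsf : s ≠ f) :
    False := by
  have hn := hC.eight_le
  have n1 := hC.edge_ne e₁
  have n3 := hC.edge_ne e₃
  obtain ⟨mx, ms, -⟩ := hC.edge_mem e₁
  obtain ⟨-, md, mf⟩ := hC.edge_mem e₃
  have own := fun {v} => hC.exists_owns_of_meetsAll (v := v) e₁ e₂ e₃ h₁ h₂ h₃ hac hsd hsf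
  have sub : {x, s, a, c, d, f} ⊆ V := by
    have := hC.edge_mem e₁
    have := hC.edge_mem e₂
    simp [Finset.insert_subset_iff, *]
  have eq_of : ∀ {p q v w : ℕ}, Owns 𝒻 p q v → Owns 𝒻 p q w → v = w := fun h h' => h'.2 _ h.1
  by_cases hcap : a = d ∨ a = f ∨ c = d ∨ c = f
  · have hW : ({x, s, a, c, d, f} : Finset ℕ).card ≤ 5 := by
      rcases hcap with rfl | rfl | rfl | rfl
      · exact (Finset.card_le_card (t := {x, s, a, c, f}) (by grind)).trans
          Finset.card_le_five
      · exact (Finset.card_le_card (t := {x, s, a, c, d}) (by grind)).trans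
          Finset.card_le_five
      · exact (Finset.card_le_card (t := {x, s, a, c, f}) (by grind)).trans
          Finset.card_le_five
      · exact (Finset.card_le_card (t := {x, s, a, c, d}) (by grind)).trans
          Finset.card_le_five
    have := Finset.le_card_sdiff {x, s, a, c, d, f} V
    rw [hC.card_ground] at this
    obtain ⟨u, v, w, hu, hv, hw, huv, huw, hvw⟩ := Finset.two_lt_card_iff.1
      (show 2 < (V \ {x, s, a, c, d, f}).card by omega)
    rw [Finset.mem_sdiff] at hu hv hw
    obtain ⟨g, hg⟩ : ∃ g, ∀ v ∈ V, v ∉ ({x, s, a, c, d, f} : Finset ℕ) →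
        Owns 𝒻 s g v ∨ Owns 𝒻 a c v := by
      have hx : ∀ v ∉ ({x, s, a, c, d, f} : Finset ℕ), v ≠ x := by rintro v hv rfl; simp at hv
      have ha : ∀ v ∉ ({x, s, a, c, d, f} : Finset ℕ), ¬ Owns 𝒻 s a v := fun v hv o =>
        hx v hv (o.2 _ e₁.rotate).symm
      have hc : ∀ v ∉ ({x, s, a, c, d, f} : Finset ℕ), ¬ Owns 𝒻 s c v := fun v hv o =>
        hx v hv (o.2 _ e₂.rotate).symm
      rcases hcap with r | r | r | r
      · refine ⟨f, fun v hv hvW => ?_⟩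
        have o := own hv hvW; have no := ha v hvW; rw [r] at no; clear * - o no; tauto
      · refine ⟨d, fun v hv hvW => ?_⟩
        have o := own hv hvW; have no := ha v hvW; rw [r] at no; clear * - o no; tauto
      · refine ⟨f, fun v hv hvW => ?_⟩
        have o := own hv hvW; have no := hc v hvW; rw [r] at no; clear * - o no; tauto
      · refine ⟨d, fun v hv hvW => ?_⟩
        have o := own hv hvW; have no := hc v hvW; rw [r] at no; clear * - o no; tauto
    rcases hg u hu.1 hu.2 with ou | ou <;> rcases hg v hv.1 hv.2 with ov | ov <;>
      rcases hg w hw.1 hw.2 with ow | ow <;>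
      first
      | exact huv (eq_of ou ov)
      | exact huw (eq_of ou ow)
      | exact hvw (eq_of ov ow)
  · have key : ∀ v w, v ∉ ({x, s, a, c, d, f} : Finset ℕ) → w ∉ ({x, s, a, c, d, f} : Finset ℕ) →
        Owns 𝒻 s d v → Owns 𝒻 s f w → False := by
      intro v w hv hw ov ow
      have hvx : v ≠ x := by rintro rfl; simp at hv
      have hwx : w ≠ x := by rintro rfl; simp at hw
      have hY : (V \ {x, s, d, f}).card = n - 4 := by
        have h4 : ({x, s, d, f} : Finset ℕ).card = 4 := by
          rw [Finset.card_insert_of_notMem, Finset.card_eq_three.2 ⟨s, d, f, hsd, hsf, n3.2.2, rfl⟩]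
          simp [n1.1, n3.1, n3.2.1]
        rw [Finset.card_sdiff_of_subset (by simp [Finset.insert_subset_iff, *]), h4,
          hC.card_ground]
      have h2 : ({{s, d, v}, {s, f, w}} : Finset (Finset ℕ)).card ≤ 2 := Finset.card_le_two
      refine hC.false_of_star (x := x) ms {{s, d, v}, {s, f, w}} (V \ {x, s, d, f})
        (by rw [hY]; omega) fun p q e => ?_
      have nx : ¬ Edge 𝒻 s x d := fun e => hvx (ov.2 _ e.right_comm).symm
      have nx' : ¬ Edge 𝒻 s x f := fun e => hwx (ow.2 _ e.right_comm).symm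
      have half : ∀ p q, Edge 𝒻 s p q → p = x ∨ p = d ∨ p = f →
          {s, p, q} ∈ ({{s, d, v}, {s, f, w}} : Finset (Finset ℕ)) ∨
            (p = x ∧ q ∈ V \ {x, s, d, f}) := by
        intro p q e hp
        have ne := hC.edge_ne e
        have me := hC.edge_mem e
        simp only [Finset.mem_insert, Finset.mem_singleton, Finset.mem_sdiff, not_or]
        rcases hp with rfl | rfl | rfl
        · right
          refine ⟨rfl, me.2.2, ne.2.2.symm, ne.2.1.symm, ?_, ?_⟩
          · rintro rfl; exact nx e
          · rintro rfl; exact nx' e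
        · left; left; rw [ov.2 _ e]
        · left; right; rw [ow.2 _ e]
      rcases h₃ _ _ _ e with k | k | k
      · exact absurd k (by clear * - n1 hsd hsf; tauto)
      · exact (half p q e k).imp_right Or.inl
      · have := half q p e.right_comm k
        rw [Finset.pair_comm q p] at this
        exact this.imp_right Or.inr
    obtain ⟨v, hv, w, hw, hvW, hwW, hvw⟩ := hC.exists_two_outside {x, s, a, c, d, f} (by
      have : ({x, s, a, c, d, f} : Finset ℕ).card ≤ 6 := Finset.card_le_six
      omega)
    rcases own hv hvW with ov | ov | ov
    · rcases own hw hwW with ow | ow | ow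
      · exact hvw (eq_of ov ow)
      · exact key v w hvW hwW ov ow
      · exact hcap ow.2
    · rcases own hw hwW with ow | ow | ow
      · exact key w v hwW hvW ow ov
      · exact hvw (eq_of ov ow)
      · exact hcap ow.2
    · exact hcap ov.2

lemma exists_mem_of_isBlocking (hC : IsCritical n V 𝒻) {F G : Finset ℕ} (hF : IsBlocking 𝒻 F)
    (hG : G ∈ 𝒻) : ∃ x ∈ F, x ∈ G := by
  obtain ⟨x, y, z, -, -, -, hF'⟩ := Finset.card_eq_three.1 (hC.uniform F hF.1)
  obtain ⟨p, q, r, -, -, -, rfl⟩ := Finset.card_eq_three.1 (hC.uniform G hG)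
  have := (hF.2 _ _ _ hF').1 _ _ _ hG
  subst hF'
  by_contra! hcon
  have hp := mt (hcon p)
  have hq := mt (hcon q)
  have hr := mt (hcon r)
  simp only [Finset.mem_insert, Finset.mem_singleton, not_or] at hp hq hr
  grind

lemma not_isBlocking_of_pair (hC : IsCritical n V 𝒻) {x y a b : ℕ} {G : Finset ℕ}
    (h₁ : IsBlocking 𝒻 {x, y, a}) (h₂ : IsBlocking 𝒻 {x, y, b}) (hab : a ≠ b)
    (h₃ : IsBlocking 𝒻 G) (hG₁ : G ≠ {x, y, a}) (hG₂ : G ≠ {x, y, b}) : False := by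
  have e₁ : Edge 𝒻 x y a := h₁.1
  have e₂ : Edge 𝒻 x y b := h₂.1
  have n1 := hC.edge_ne e₁
  have n2 := hC.edge_ne e₂
  have m₁ := (h₁.2 _ _ _ rfl).1
  have m₂ := (h₂.2 _ _ _ rfl).1
  have one : ∀ x y a b, IsBlocking 𝒻 {x, y, a} → IsBlocking 𝒻 {x, y, b} → a ≠ b → x ∈ G → y ∉ G →
      False := by
    intro x y a b h₁ h₂ hab hx hy
    obtain ⟨p, q, e, rfl⟩ := hC.exists_edge_of_mem h₃.1 hx
    simp only [Finset.mem_insert, Finset.mem_singleton, not_or] at hy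
    exact hC.not_meetsAll_kite h₁.1 h₂.1 e (h₁.2 _ _ _ rfl).1 (h₂.2 _ _ _ rfl).1
      (h₃.2 _ _ _ rfl).1 hab hy.2.1 hy.2.2
  by_cases hx : x ∈ G <;> by_cases hy : y ∈ G
  · obtain ⟨c, e, rfl⟩ := hC.exists_edge_of_pair_mem h₃.1 hx hy n1.1
    refine hC.not_meetsAll_book e₁ e₂ e m₂ (h₃.2 _ _ _ rfl).1 m₁ (h₁.2 a x y ?_).2 hab ?_ ?_
    · ext; simp; tauto
    · rintro rfl; exact hG₁ rfl
    · rintro rfl; exact hG₂ rfl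
  · exact one x y a b h₁ h₂ hab hx hy
  · rw [Finset.insert_comm] at h₁ h₂
    exact one y x a b h₁ h₂ hab hy hx
  · have ha : a ∈ G := by
      obtain ⟨t, ht, ht'⟩ := hC.exists_mem_of_isBlocking h₁ h₃.1
      simp only [Finset.mem_insert, Finset.mem_singleton] at ht
      rcases ht with rfl | rfl | rfl <;> tauto
    have hb : b ∈ G := by
      obtain ⟨t, ht, ht'⟩ := hC.exists_mem_of_isBlocking h₂ h₃.1
      simp only [Finset.mem_insert, Finset.mem_singleton] at ht
      rcases ht with rfl | rfl | rfl <;> tauto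
    obtain ⟨z, e, rfl⟩ := hC.exists_edge_of_pair_mem h₃.1 ha hb hab
    simp only [Finset.mem_insert, Finset.mem_singleton, not_or] at hx hy
    exact hC.not_meetsAll_tent e₁ m₁ m₂ (h₃.2 _ _ _ rfl).1 ⟨n1.1, hx⟩ hy hab

lemma not_three_isBlocking (hC : IsCritical n V 𝒻) {F G H : Finset ℕ} (hF : IsBlocking 𝒻 F)
    (hG : IsBlocking 𝒻 G) (hH : IsBlocking 𝒻 H) (hFG : F ≠ G) (hFH : F ≠ H) (hGH : G ≠ H) :
    False := by
  have inter : ∀ {F G H : Finset ℕ}, IsBlocking 𝒻 F → IsBlocking 𝒻 G → IsBlocking 𝒻 H →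
      F ≠ G → F ≠ H → G ≠ H → ∀ x y, x ∈ F → y ∈ F → x ∈ G → y ∈ G → x = y := by
    intro F G H hF hG hH hFG hFH hGH x y xF yF xG yG
    by_contra hxy
    obtain ⟨a, -, rfl⟩ := hC.exists_edge_of_pair_mem hF.1 xF yF hxy
    obtain ⟨b, -, rfl⟩ := hC.exists_edge_of_pair_mem hG.1 xG yG hxy
    exact hC.not_isBlocking_of_pair hF hG (by rintro rfl; exact hFG rfl) hH hFH.symm hGH.symm
  have iFG := inter hF hG hH hFG hFH hGH
  have iFH := inter hF hH hG hFH hFG hGH.symm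
  have iGH := inter hG hH hF hGH hFG.symm hFH.symm
  obtain ⟨p, pF, pG⟩ := hC.exists_mem_of_isBlocking hF hG.1
  by_cases pH : p ∈ H
  · obtain ⟨a₁, b₁, e₁, rfl⟩ := hC.exists_edge_of_mem hF.1 pF
    obtain ⟨a₂, b₂, e₂, rfl⟩ := hC.exists_edge_of_mem hG.1 pG
    obtain ⟨a₃, b₃, e₃, rfl⟩ := hC.exists_edge_of_mem hH.1 pH
    have n1 := hC.edge_ne e₁
    have n2 := hC.edge_ne e₂
    have n3 := hC.edge_ne e₃
    have iFG' := fun y h h' => iFG p y pF h pG h'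
    have iFH' := fun y h h' => iFH p y pF h pH h'
    have iGH' := fun y h h' => iGH p y pG h pH h'
    simp only [Finset.mem_insert, Finset.mem_singleton] at iFG' iFH' iGH'
    refine hC.not_meetsAll_sunflower (hC.edge_mem e₁).1 (hF.2 _ _ _ rfl).1 (hG.2 _ _ _ rfl).1
      (hH.2 _ _ _ rfl).1 ?_ ?_ ?_
    · have h := iFG' a₁; have h' := iFG' b₁; clear * - h h' n1 n2; grind
    · have h := iFH' a₁; have h' := iFH' b₁; clear * - h h' n1 n3; grind
    · have h := iGH' a₂; have h' := iGH' b₂; clear * - h h' n2 n3; grind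
  · obtain ⟨q, qF, qH⟩ := hC.exists_mem_of_isBlocking hF hH.1
    obtain ⟨r, rG, rH⟩ := hC.exists_mem_of_isBlocking hG hH.1
    have hpq : p ≠ q := by rintro rfl; exact pH qH
    have hpr : p ≠ r := by rintro rfl; exact pH rH
    have hqr : q ≠ r := by rintro rfl; exact hpq (iFG _ _ pF qF pG rG)
    obtain ⟨a, e₁, rfl⟩ := hC.exists_edge_of_pair_mem hF.1 pF qF hpq
    obtain ⟨b, e₂, rfl⟩ := hC.exists_edge_of_pair_mem hG.1 pG rG hpr
    obtain ⟨c, e₃, rfl⟩ := hC.exists_edge_of_pair_mem hH.1 qH rH hqr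
    have n1 := hC.edge_ne e₁
    have n2 := hC.edge_ne e₂
    have n3 := hC.edge_ne e₃
    have iFG' := fun y h h' => iFG p y pF h pG h'
    have iFH' := fun y h h' => iFH q y qF h qH h'
    have iGH' := fun y h h' => iGH r y rG h rH h'
    simp only [Finset.mem_insert, Finset.mem_singleton] at iFG' iFH' iGH'
    refine hC.not_meetsAll_triangle (hF.2 _ _ _ rfl).1 (hG.2 _ _ _ rfl).1 (hH.2 _ _ _ rfl).1
      ⟨hpq, hpr, hqr⟩ ⟨?_, ?_, ?_⟩ ?_ ?_ ?_ <;>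
    · have f₁ := iFG' a; have f₂ := iFG' b; have f₃ := iFG' q; have f₄ := iFG' r
      have g₁ := iFH' a; have g₂ := iFH' c; have g₃ := iFH' p; have g₄ := iFH' r
      have h₁ := iGH' b; have h₂ := iGH' c; have h₃ := iGH' p; have h₄ := iGH' q
      clear * - f₁ f₂ f₃ f₄ g₁ g₂ g₃ g₄ h₁ h₂ h₃ h₄ n1 n2 n3
      grind

end IsCritical

/-- `P` lies in exactly one edge. -/
def IsLight (𝒻 : Finset (Finset ℕ)) (P : Finset ℕ) : Prop := ∃! F, F ∈ 𝒻 ∧ P ⊆ F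

open Classical in
/-- The pairs of vertices that do not lie in exactly one edge. -/
noncomputable def heavyPairs (V : Finset ℕ) (𝒻 : Finset (Finset ℕ)) : Finset (Finset ℕ) :=
  (V.powersetCard 2).filter fun P => ¬ IsLight 𝒻 P

namespace IsCritical

lemma not_isLight (hC : IsCritical n V 𝒻) {v x w₁ w₂ : ℕ} (e₁ : Edge 𝒻 v x w₁)
    (e₂ : Edge 𝒻 v x w₂) (hw : w₁ ≠ w₂) : ¬ IsLight 𝒻 {v, x} := by
  intro h
  have key : ({v, x, w₁} : Finset ℕ) = {v, x, w₂} :=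
    h.unique ⟨e₁, by intro; simp; tauto⟩ ⟨e₂, by intro; simp; tauto⟩
  have hm : w₁ ∈ ({v, x, w₂} : Finset ℕ) := key ▸ by simp
  have ne := hC.edge_ne e₁
  simp [ne.2.1.symm, ne.2.2.symm, hw] at hm

lemma exists_edge_ne_of_not_isLight (hC : IsCritical n V 𝒻) {p q r : ℕ} (e : Edge 𝒻 p q r)
    (h : ¬ IsLight 𝒻 {p, q}) : ∃ x, Edge 𝒻 p q x ∧ x ≠ r := by
  by_contra! hcon
  refine h ⟨{p, q, r}, ⟨e, by intro; simp; tauto⟩, ?_⟩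
  rintro F ⟨hF, hs⟩
  obtain ⟨x, ex, rfl⟩ := hC.exists_edge_of_pair_mem hF (hs (by simp)) (hs (by simp))
    (hC.edge_ne e).1
  rw [hcon x ex]

lemma le_card_heavyPairs {v : ℕ} (hv : v ∈ V) (M : Finset ℕ)
    (hM : ∀ x ∈ M, x ∈ V ∧ x ≠ v ∧ ¬ IsLight 𝒻 {v, x}) :
    M.card ≤ ((heavyPairs V 𝒻).filter (v ∈ ·)).card := by
  classical
  refine Finset.card_le_card_of_injOn (fun x => {v, x}) ?_ ?_
  · intro x hx
    obtain ⟨h1, h2, h3⟩ := hM x hx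
    simp [heavyPairs, Finset.mem_powersetCard, Finset.insert_subset_iff, hv, h1, h3,
      Finset.card_pair h2.symm]
  · intro x hx y hy h
    have hxy : x ∈ ({v, y} : Finset ℕ) := by rw [← show ({v, x} : Finset ℕ) = {v, y} from h]; simp
    simpa [(hM x hx).2.1] using hxy

lemma three_le_card_heavyPairs (hC : IsCritical n V 𝒻) {v : ℕ} (hv : v ∈ V) :
    3 ≤ ((heavyPairs V 𝒻).filter (v ∈ ·)).card := by
  classical
  have hn := hC.eight_le
  have hVv : (V.erase v).card = n - 1 := by rw [Finset.card_erase_of_mem hv, hC.card_ground]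
  by_contra! hlt
  set M := (V.erase v).filter fun x => ¬ IsLight 𝒻 {v, x} with hM
  have hM2 : M.card ≤ 2 := by
    have := le_card_heavyPairs hv M fun x hx => by
      simp only [hM, Finset.mem_filter, Finset.mem_erase] at hx; tauto
    omega
  obtain ⟨N, hMN, hNV, hN⟩ := Finset.exists_subsuperset_card_eq (Finset.filter_subset _ _) hM2
    (show 2 ≤ (V.erase v).card by omega)
  let g : ℕ → Finset ℕ := fun x => if h : IsLight 𝒻 {v, x} then h.choose else ∅
  have light : ∀ p q, Edge 𝒻 v p q → p ∉ N → {v, p, q} ∈ (V.erase v \ N).image g := by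
    intro p q e hp
    have ne := hC.edge_ne e
    have hpV : p ∈ V.erase v := Finset.mem_erase.2 ⟨ne.1.symm, (hC.edge_mem e).2.1⟩
    have hl : IsLight 𝒻 {v, p} := by
      by_contra h
      exact hp (hMN (Finset.mem_filter.2 ⟨hpV, h⟩))
    refine Finset.mem_image.2 ⟨p, Finset.mem_sdiff.2 ⟨hpV, hp⟩, ?_⟩
    simp only [g, dif_pos hl]
    exact hl.unique hl.choose_spec.1 ⟨e, by intro; simp; tauto⟩
  have hs : 𝒻.filter (v ∈ ·) ⊆ insert (insert v N) ((V.erase v \ N).image g) := by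
    intro F hF
    obtain ⟨hF, hvF⟩ := Finset.mem_filter.1 hF
    obtain ⟨p, q, e, rfl⟩ := hC.exists_edge_of_mem hF hvF
    rw [Finset.mem_insert]
    by_cases hp : p ∈ N
    · by_cases hq : q ∈ N
      · left
        rw [Finset.eq_of_subset_of_card_le (s := {p, q}) (t := N)
          (by simp [Finset.insert_subset_iff, hp, hq])
          (by rw [hN, Finset.card_pair (hC.edge_ne e).2.2])]
      · right
        rw [Finset.pair_comm p q]
        exact light q p e.right_comm hq
    · exact Or.inr (light p q e hp)
  have h1 := (hC.le_degree v hv).trans ((Finset.card_le_card hs).trans (Finset.card_insert_le _ _))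
  have h2 := Finset.card_image_le (s := V.erase v \ N) (f := g)
  rw [Finset.card_sdiff_of_subset hNV, hVv, hN] at h2
  omega

lemma four_le_card_heavyPairs (hC : IsCritical n V 𝒻) {v x y : ℕ} (e : Edge 𝒻 v x y)
    (h : CoversLink 𝒻 v x y) : 4 ≤ ((heavyPairs V 𝒻).filter (v ∈ ·)).card := by
  obtain ⟨hv, hx, hy⟩ := hC.edge_mem e
  have ne := hC.edge_ne e
  obtain ⟨w₁, w₂, hw, e₁, f₁, e₂, f₂⟩ := hC.exists_two_common hv hx hy ne.1 ne.2.1 ne.2.2 h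
  have n1 := hC.edge_ne e₁
  have n2 := hC.edge_ne e₂
  have n3 := hC.edge_ne f₁
  have n4 := hC.edge_ne f₂
  have h4 : ({x, y, w₁, w₂} : Finset ℕ).card = 4 := by
    rw [Finset.card_insert_of_notMem (by simp [ne.2.2, n1.2.2, n2.2.2]),
      Finset.card_insert_of_notMem (by simp [n3.2.2, n4.2.2]), Finset.card_pair hw]
  rw [← h4]
  refine le_card_heavyPairs hv _ fun t ht => ?_
  simp only [Finset.mem_insert, Finset.mem_singleton] at ht
  rcases ht with rfl | rfl | rfl | rfl
  · exact ⟨hx, ne.1.symm, hC.not_isLight e₁ e₂ hw⟩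
  · exact ⟨hy, ne.2.1.symm, hC.not_isLight f₁ f₂ hw⟩
  · exact ⟨(hC.edge_mem e₁).2.2, n1.2.1.symm, hC.not_isLight e₁.right_comm f₁.right_comm ne.2.2⟩
  · exact ⟨(hC.edge_mem e₂).2.2, n2.2.1.symm, hC.not_isLight e₂.right_comm f₂.right_comm ne.2.2⟩

/-- At most one edge at `v` covers the link of `v`. -/
lemma eq_of_coversLink (hC : IsCritical n V 𝒻) {v x y x' y' : ℕ} (e : Edge 𝒻 v x y)
    (h : CoversLink 𝒻 v x y) (h' : CoversLink 𝒻 v x' y') :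
    ({v, x, y} : Finset ℕ) = {v, x', y'} := by
  obtain ⟨hv, hx, hy⟩ := hC.edge_mem e
  have ne := hC.edge_ne e
  obtain ⟨w₁, w₂, hw, e₁, f₁, e₂, f₂⟩ := hC.exists_two_common hv hx hy ne.1 ne.2.1 ne.2.2 h
  have n1 := hC.edge_ne e₁
  have n2 := hC.edge_ne e₂
  have n3 := hC.edge_ne f₁
  have n4 := hC.edge_ne f₂
  have k0 := h' _ _ e
  have k1 := h' _ _ e₁
  have k2 := h' _ _ f₁
  have k3 := h' _ _ e₂
  have k4 := h' _ _ f₂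
  have : (x' = x ∧ y' = y) ∨ (x' = y ∧ y' = x) := by
    clear * - ne hw n1 n2 n3 n4 k0 k1 k2 k3 k4
    grind
  rcases this with ⟨rfl, rfl⟩ | ⟨rfl, rfl⟩
  · rfl
  · rw [Finset.pair_comm]

lemma sum_card_heavyPairs (V : Finset ℕ) (𝒻 : Finset (Finset ℕ)) :
    ∑ v ∈ V, ((heavyPairs V 𝒻).filter (v ∈ ·)).card = 2 * (heavyPairs V 𝒻).card := by
  classical
  have := Finset.sum_card_bipartiteAbove_eq_sum_card_bipartiteBelow (s := V)
    (t := heavyPairs V 𝒻) (fun v P => v ∈ P)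
  simp only [Finset.bipartiteAbove, Finset.bipartiteBelow] at this
  rw [this, mul_comm, ← smul_eq_mul, ← Finset.sum_const]
  refine Finset.sum_congr rfl fun P hP => ?_
  obtain ⟨hP, h2⟩ := Finset.mem_powersetCard.1 (Finset.mem_filter.1 hP).1
  rw [Finset.filter_mem_eq_inter, Finset.inter_eq_right.2 hP, h2]

lemma false (hC : IsCritical n V 𝒻) : False := by
  classical
  set L := (V.powersetCard 2).filter (IsLight 𝒻)
  have hLU : L.card + (heavyPairs V 𝒻).card = n.choose 2 := by
    rw [← hC.card_ground, ← Finset.card_powersetCard]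
    exact Finset.card_filter_add_card_filter_not _
  set A := 𝒻.filter fun F => ∃ P ∈ L, P ⊆ F
  have hA : A.card ≤ L.card := by
    let g : Finset ℕ → Finset ℕ := fun P => if h : IsLight 𝒻 P then h.choose else ∅
    have hs : A ⊆ L.image g := by
      intro F hF
      obtain ⟨hF, P, hP, hPF⟩ := Finset.mem_filter.1 hF
      have hl : IsLight 𝒻 P := (Finset.mem_filter.1 hP).2
      refine Finset.mem_image.2 ⟨P, hP, ?_⟩
      simp only [g, dif_pos hl]
      exact hl.unique hl.choose_spec.1 ⟨hF, hPF⟩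
    exact (Finset.card_le_card hs).trans Finset.card_image_le
  set R := V.filter fun v => ∃ x y, Edge 𝒻 v x y ∧ CoversLink 𝒻 v x y
  set B := 𝒻.filter fun F => ∃ v x y, F = {v, x, y} ∧ CoversLink 𝒻 v x y
  have hB : B.card ≤ R.card := by
    let g : ℕ → Finset ℕ := fun v =>
      if h : ∃ x y, Edge 𝒻 v x y ∧ CoversLink 𝒻 v x y then {v, h.choose, h.choose_spec.choose} else ∅
    have hs : B ⊆ R.image g := by
      intro F hF
      obtain ⟨e, v, x, y, rfl, hc⟩ := Finset.mem_filter.1 hF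
      have h : ∃ x y, Edge 𝒻 v x y ∧ CoversLink 𝒻 v x y := ⟨x, y, e, hc⟩
      refine Finset.mem_image.2 ⟨v, Finset.mem_filter.2 ⟨(hC.edge_mem e).1, h⟩, ?_⟩
      simp only [g, dif_pos h]
      exact (hC.eq_of_coversLink e hc h.choose_spec.choose_spec.2).symm
    exact (Finset.card_le_card hs).trans Finset.card_image_le
  have hU : 3 * n + R.card ≤ 2 * (heavyPairs V 𝒻).card := by
    rw [← sum_card_heavyPairs, ← hC.card_ground, Finset.card_filter, mul_comm, ← smul_eq_mul,
      ← Finset.sum_const, ← Finset.sum_add_distrib]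
    refine Finset.sum_le_sum fun v hv => ?_
    split_ifs with h
    · obtain ⟨x, y, e, h⟩ := h
      exact hC.four_le_card_heavyPairs e h
    · exact hC.three_le_card_heavyPairs hv
  have hRn : R.card ≤ n := hC.card_ground ▸ Finset.card_filter_le _ _
  have blocking : ∀ F ∈ 𝒻 \ (A ∪ B), IsBlocking 𝒻 F := by
    intro F hF
    simp only [A, B, Finset.mem_sdiff, Finset.mem_union, Finset.mem_filter, not_or, not_and] at hF
    obtain ⟨hF, hFA, hFB⟩ := hF
    refine ⟨hF, ?_⟩
    rintro a b c rfl
    have nl : ∀ p q r, ({a, b, c} : Finset ℕ) = {p, q, r} → ∃ x, Edge 𝒻 p q x ∧ x ≠ r := by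
      intro p q r h
      have e : Edge 𝒻 p q r := by unfold Edge; rwa [← h]
      refine hC.exists_edge_ne_of_not_isLight e fun hl => hFA hF ⟨{p, q}, ?_, ?_⟩
      · have := hC.edge_mem e
        simp [L, Finset.mem_powersetCard, Finset.insert_subset_iff, hl, this,
          Finset.card_pair (hC.edge_ne e).1]
      · rw [h]; intro; simp; tauto
    have nc : ∀ p q r, ({a, b, c} : Finset ℕ) = {p, q, r} → ¬ CoversLink 𝒻 p q r :=
      fun p q r h k => hFB hF ⟨p, q, r, h, k⟩
    have r1 : ({a, b, c} : Finset ℕ) = {a, c, b} := by rw [Finset.pair_comm]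
    have r2 : ({a, b, c} : Finset ℕ) = {b, a, c} := by rw [Finset.insert_comm]
    have r3 : ({a, b, c} : Finset ℕ) = {b, c, a} := by rw [r2, Finset.pair_comm]
    have r4 : ({a, b, c} : Finset ℕ) = {c, a, b} := by rw [r1, Finset.insert_comm]
    obtain ⟨x, ex, hx⟩ := nl a b c rfl
    obtain ⟨y, ey, hy⟩ := nl a c b r1
    obtain ⟨z, ez, hz⟩ := nl b c a r3
    rcases hC.covers_or_meetsAll hF ex hx ey hy ez hz with k | k | k | k
    · exact absurd k (nc _ _ _ rfl)
    · exact absurd k (nc _ _ _ r2)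
    · exact absurd k (nc _ _ _ r4)
    · exact ⟨k, nc _ _ _ rfl⟩
  have h2 : (𝒻 \ (A ∪ B)).card ≤ 2 := by
    by_contra! h
    obtain ⟨F, G, H, hF, hG, hH, hFG, hFH, hGH⟩ := Finset.two_lt_card_iff.1 h
    exact hC.not_three_isBlocking (blocking F hF) (blocking G hG) (blocking H hH) hFG hFH hGH
  have h3 := Finset.card_le_card_sdiff_add_card (s := 𝒻) (t := A ∪ B)
  have h4 := Finset.card_union_le A B
  have hn := hC.eight_le
  have hs := hC.size
  obtain ⟨m, rfl⟩ : ∃ m, n = m + 1 := ⟨n - 1, by omega⟩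
  have h5 : (m + 1).choose 2 = m + m.choose 2 := by
    rw [Nat.choose_succ_succ' m 1, Nat.choose_one_right]
  rw [Nat.add_sub_cancel] at hs
  omega

end IsCritical

lemma mem_of_shatters {𝒢 : Finset (Finset ℕ)} {S : Finset ℕ} (h3 : ∀ G ∈ 𝒢, G.card = 3)
    (hS : S.card = 3) (h : Shatters 𝒢 S) : S ∈ 𝒢 := by
  obtain ⟨F, hF, hFS⟩ := h S subset_rfl
  have := Finset.eq_of_subset_of_card_le (Finset.inter_eq_right.1 hFS) (by rw [h3 F hF, hS])
  rwa [this]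

lemma isCritical_of_lt (hn : 8 ≤ n)
    (ih : ∀ (V : Finset ℕ) (𝒢 : Finset (Finset ℕ)), V.card = n - 1 →
      (∀ G ∈ 𝒢, G ⊆ V) → (∀ G ∈ 𝒢, G.card = 3) →
      (∀ S ⊆ V, S.card = 3 → ¬ Shatters 𝒢 S) →
      𝒢.card ≤ (n - 2).choose 2 + 1)
    (hV : V.card = n) (hsub : ∀ F ∈ 𝒻, F ⊆ V) (hcard : ∀ F ∈ 𝒻, F.card = 3)
    (hVC : ∀ S ⊆ V, S.card = 3 → ¬ Shatters 𝒻 S) (hlt : (n - 1).choose 2 + 1 < 𝒻.card) :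
    IsCritical n V 𝒻 := by
  classical
  have hchoose : (n - 1).choose 2 = (n - 2).choose 2 + (n - 2) := by
    obtain ⟨m, rfl⟩ : ∃ m, n = m + 2 := ⟨n - 2, by omega⟩
    simp only [Nat.add_sub_cancel, show m + 2 - 1 = m + 1 by omega]
    rw [Nat.choose_succ_succ' m 1, Nat.choose_one_right, add_comm]
  have hsplit : ∀ v, (𝒻.filter (v ∈ ·)).card + (𝒻.filter (v ∉ ·)).card = 𝒻.card := fun v =>
    Finset.card_filter_add_card_filter_not _
  have hcardV : ∀ v ∈ V, (V.erase v).card = n - 1 := fun v hv => by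
    rw [Finset.card_erase_of_mem hv, hV]
  have hground : ∀ v, ∀ G ∈ 𝒻.filter (v ∉ ·), G ⊆ V.erase v := fun v G hG =>
    Finset.subset_erase.2 ⟨hsub G (Finset.mem_filter.1 hG).1, (Finset.mem_filter.1 hG).2⟩
  refine ⟨hn, hV, hsub, hcard, fun F hF => hVC F (hsub F hF) (hcard F hF), ?_, hlt, ?_⟩
  · intro v hv
    have h1 := ih (V.erase v) (𝒻.filter (v ∉ ·)) (hcardV v hv) (hground v)
      (fun G hG => hcard G (Finset.mem_filter.1 hG).1) fun S hS h3 h =>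
        hVC S (hS.trans (Finset.erase_subset _ _)) h3 fun T hT => by
          obtain ⟨F, hF, hFT⟩ := h T hT
          exact ⟨F, (Finset.mem_filter.1 hF).1, hFT⟩
    have h2 := hsplit v
    omega
  · intro a b c d habc habd hacd hdeg
    by_contra! hcon
    have mem : a ∈ V ∧ b ∈ V ∧ c ∈ V := by simpa [Finset.insert_subset_iff] using hsub _ habc
    have hd : d ∈ V := hsub _ habd (by simp)
    have ne : ∀ p q r, Edge 𝒻 p q r → p ≠ q ∧ p ≠ r ∧ q ≠ r := by
      intro p q r e
      have h3 := hcard _ e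
      have h2 : ∀ x y : ℕ, ({x, y} : Finset ℕ).card ≠ 3 := fun x y => by
        have := Finset.card_le_two (a := x) (b := y); omega
      refine ⟨?_, ?_, ?_⟩ <;> rintro rfl <;> simp_all
    have n1 := ne _ _ _ habc
    have n2 := ne _ _ _ habd
    have n3 := ne _ _ _ hacd
    have hbcd : ({b, c, d} : Finset ℕ) ∉ 𝒻 := fun h => hcon d n2.2.1.symm h
    have huni : ∀ G ∈ insert {b, c, d} (𝒻.filter (a ∉ ·)), G.card = 3 := by
      intro G hG
      rcases Finset.mem_insert.1 hG with rfl | hG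
      · exact Finset.card_eq_three.2 ⟨b, c, d, n1.2.2, n2.2.2, n3.2.2, rfl⟩
      · exact hcard G (Finset.mem_filter.1 hG).1
    have h1 := ih (V.erase a) (insert {b, c, d} (𝒻.filter (a ∉ ·))) (hcardV a mem.1) (by
        intro G hG
        rcases Finset.mem_insert.1 hG with rfl | hG
        · simp [Finset.insert_subset_iff, mem, hd, n1.1.symm, n1.2.1.symm, n2.2.1.symm]
        · exact hground a G hG) huni (by
        intro S hSV hS3 hS
        have haS : a ∉ S := (Finset.subset_erase.1 hSV).2
        rcases Finset.mem_insert.1 (mem_of_shatters huni hS3 hS) with rfl | hS𝒻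
        · obtain ⟨F, hF, hFT⟩ := hS {b, c} (by intro; simp; tauto)
          have hbF : b ∈ F := (Finset.mem_inter.1 (hFT.symm ▸ by simp : b ∈ F ∩ {b, c, d})).1
          have hcF : c ∈ F := (Finset.mem_inter.1 (hFT.symm ▸ by simp : c ∈ F ∩ {b, c, d})).1
          have hdF : d ∉ F := fun h => by
            have : d ∈ F ∩ {b, c, d} := Finset.mem_inter.2 ⟨h, by simp⟩
            rw [hFT] at this
            simp [n2.2.2.symm, n3.2.2.symm] at this
          rcases Finset.mem_insert.1 hF with rfl | hF
          · simp at hdF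
          obtain ⟨hF, haF⟩ := Finset.mem_filter.1 hF
          have hss : {b, c} ⊆ F := by simp [Finset.insert_subset_iff, hbF, hcF]
          have h1 : (F \ {b, c}).card = 1 := by
            rw [Finset.card_sdiff_of_subset hss, hcard F hF, Finset.card_pair n1.2.2]
          obtain ⟨z, hz⟩ := Finset.card_eq_one.1 h1
          have hFz : F = {b, c, z} := by
            rw [← Finset.sdiff_union_of_subset hss, hz]; ext; simp; tauto
          refine hcon z ?_ (by unfold Edge; rwa [← hFz])
          rintro rfl
          exact haF (hFz ▸ by simp)
        · have hS' := (Finset.mem_filter.1 hS𝒻).1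
          refine hVC S (hsub S hS') hS3 fun T hT => ?_
          obtain ⟨F, hF, hFT⟩ := hS T hT
          rcases Finset.mem_insert.1 hF with rfl | hF
          · have hout : b ∉ S ∨ c ∉ S ∨ d ∉ S := by
              by_contra! h
              refine hbcd ?_
              rwa [Finset.eq_of_subset_of_card_le (s := {b, c, d}) (t := S)
                (by simp [Finset.insert_subset_iff, h]) (by rw [hS3, huni _ hF])]
            rcases hout with h | h | h
            · exact ⟨_, hacd, by rw [← hFT]; ext; grind⟩
            · exact ⟨_, habd, by rw [← hFT]; ext; grind⟩
            · exact ⟨_, habc, by rw [← hFT]; ext; grind⟩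
          · exact ⟨F, (Finset.mem_filter.1 hF).1, hFT⟩)
    rw [Finset.card_insert_of_notMem fun h => hbcd (Finset.mem_filter.1 h).1] at h1
    have h2 := hsplit a
    omega

/-- Induction step: let `n ≥ 8`. If every family of 3-element subsets of an
`(n-1)`-element ground set that shatters no 3-element set has size at most
`C(n-2,2) + 1`, then every family of 3-element subsets of `[n]` that shatters no
3-element subset has size at most `C(n-1,2) + 1`. -/
theorem stmt_5 (n : ℕ) (hn : 8 ≤ n)
    (ih : ∀ (V : Finset ℕ) (𝒢 : Finset (Finset ℕ)), V.card = n - 1 →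
      (∀ G ∈ 𝒢, G ⊆ V) → (∀ G ∈ 𝒢, G.card = 3) →
      (∀ S ⊆ V, S.card = 3 → ¬ Shatters 𝒢 S) →
      𝒢.card ≤ (n - 2).choose 2 + 1)
    (𝒻 : Finset (Finset ℕ))
    (hsub : ∀ F ∈ 𝒻, F ⊆ Finset.Icc 1 n) (hcard : ∀ F ∈ 𝒻, F.card = 3)
    (hVC : ∀ S ⊆ Finset.Icc 1 n, S.card = 3 → ¬ Shatters 𝒻 S) :
    𝒻.card ≤ (n - 1).choose 2 + 1 := by
  by_contra! hlt
  exact (isCritical_of_lt hn ih (by simp) hsub hcard hVC hlt).false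
end

section
/- Let n ≥ 8 and let 𝒻 be a family of 3-element subsets of [n]. Suppose x ∈ [n] satisfies |𝒻(x)| ≥ n − 1, and suppose there exists F_i ∈ 𝒻 with x ∈ F_i such that G ∩ F_i ≠ {x} for every G ∈ 𝒻 (i.e., {x} is a witness of F_i). Then the number of elements y ∈ [n] such that the pair {x, y} is a witness of some member of 𝒻 (i.e., there exists F_j ∈ 𝒻 with {x, y} ⊆ F_j and G ∩ F_j ≠ {x, y} for every G ∈ 𝒻) is at most n − 4. -/
open Finset

/-- A 3-set containing `x` can be written as `{x, a, b}` with `x`, `a`, `b` distinct. -/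
lemma exists_eq_triple_of_mem {F : Finset ℕ} {x : ℕ} (hF : F.card = 3) (hx : x ∈ F) :
    ∃ a b, x ≠ a ∧ x ≠ b ∧ a ≠ b ∧ F = {x, a, b} := by
  obtain ⟨a, b, hab, h⟩ := card_eq_two.1 (show (F.erase x).card = 2 by
    rw [card_erase_of_mem hx, hF])
  have ha : a ∈ F.erase x := by simp [h]
  have hb : b ∈ F.erase x := by simp [h]
  exact ⟨a, b, (ne_of_mem_erase ha).symm, (ne_of_mem_erase hb).symm, hab,
    by rw [← insert_erase hx, h]⟩

/-- Two members of a 3-uniform family meeting in `{x, y}` prevent `{x, y}` from being a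
witness of any member. -/
lemma exists_inter_eq_pair {𝒻 : Finset (Finset ℕ)} (hcard : ∀ F ∈ 𝒻, F.card = 3)
    {x y u v : ℕ} (hxy : x ≠ y) (huv : u ≠ v) (hu : {x, y, u} ∈ 𝒻) (hv : {x, y, v} ∈ 𝒻)
    {F : Finset ℕ} (hF : F ∈ 𝒻) (hxyF : {x, y} ⊆ F) : ∃ G ∈ 𝒻, G ∩ F = {x, y} := by
  have hpair : ({x, y} : Finset ℕ).card = 2 := card_pair hxy
  have hsdiff : (F \ {x, y}).card = 1 := by
    rw [card_sdiff_of_subset hxyF, hcard F hF, hpair]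
  obtain ⟨w, hw⟩ := card_eq_one.1 hsdiff
  have hmem : ∀ z, z ∈ F → z ≠ x → z ≠ y → z = w := by
    intro z hz hzx hzy
    have : z ∈ F \ {x, y} := by simp [hz, hzx, hzy]
    simpa [hw] using this
  have hx : x ∈ F := hxyF (by simp)
  have hy : y ∈ F := hxyF (by simp)
  have key : ∀ z, z ≠ w → ({x, y, z} : Finset ℕ) ∩ F = {x, y} := by
    intro z hz
    ext t
    have := hmem t
    simp only [mem_inter, mem_insert, mem_singleton]
    grind
  by_cases h : u = w
  · exact ⟨_, hv, key v (fun hvw => huv (h.trans hvw.symm))⟩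
  · exact ⟨_, hu, key u h⟩

/-- If every member through `x` meets `{x, a, b}` outside `x` and at least `n - 1` members
contain `x`, then some `c` completes both `{x, a}` and `{x, b}` to a member. -/
lemma exists_common_completion {n : ℕ} (hn : 3 ≤ n) {𝒻 : Finset (Finset ℕ)}
    (hsub : ∀ F ∈ 𝒻, F ⊆ Icc 1 n) (hcard : ∀ F ∈ 𝒻, F.card = 3) {x a b : ℕ}
    (hxa : x ≠ a) (hxb : x ≠ b) (hab : a ≠ b) (hmem : {x, a, b} ∈ 𝒻)
    (hdeg : n - 1 ≤ (𝒻.filter (fun F => x ∈ F)).card)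
    (hwit : ∀ G ∈ 𝒻, G ∩ {x, a, b} ≠ {x}) :
    ∃ c, c ≠ x ∧ c ≠ a ∧ c ≠ b ∧ {x, a, c} ∈ 𝒻 ∧ {x, b, c} ∈ 𝒻 := by
  have hform : ∀ F ∈ 𝒻, x ∈ F → ∃ c, c ≠ x ∧
      ((c ≠ a ∧ F = {x, a, c}) ∨ (c ≠ b ∧ F = {x, b, c})) := by
    intro F hF hxF
    obtain ⟨p, q, hxp, hxq, hpq, rfl⟩ := exists_eq_triple_of_mem (hcard F hF) hxF
    have hne := hwit _ hF
    have : p = a ∨ p = b ∨ q = a ∨ q = b := by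
      by_contra! h
      apply hne
      ext t
      simp only [mem_inter, mem_insert, mem_singleton]
      grind
    rcases this with rfl | rfl | rfl | rfl
    · exact ⟨q, hxq.symm, .inl ⟨hpq.symm, rfl⟩⟩
    · exact ⟨q, hxq.symm, .inr ⟨hpq.symm, rfl⟩⟩
    · exact ⟨p, hxp.symm, .inl ⟨hpq, by rw [pair_comm]⟩⟩
    · exact ⟨p, hxp.symm, .inr ⟨hpq, by rw [pair_comm]⟩⟩
  have hsd : ∀ c p, c ≠ x → p ∈ ({a, b} : Finset ℕ) → c ≠ a → c ≠ b →
      ({x, p, c} : Finset ℕ) \ {x, a, b} = {c} := by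
    intro c p hcx hp hca hcb
    ext t
    simp only [mem_sdiff, mem_insert, mem_singleton] at hp ⊢
    grind
  have hlt : (insert (∅ : Finset ℕ)
      ((Icc 1 n \ {x, a, b}).image (fun y => ({y} : Finset ℕ)))).card <
      (𝒻.filter (fun F => x ∈ F)).card := by
    have h1 := card_insert_le (∅ : Finset ℕ)
      ((Icc 1 n \ {x, a, b}).image (fun y => ({y} : Finset ℕ)))
    have h2 : ((Icc 1 n \ {x, a, b}).image (fun y => ({y} : Finset ℕ))).card ≤ _ :=
      card_image_le
    rw [card_sdiff_of_subset (hsub _ hmem), hcard _ hmem, Nat.card_Icc] at h2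
    omega
  obtain ⟨F, hF, G, hG, hFG, heq⟩ := exists_ne_map_eq_of_card_lt_of_maps_to hlt
    (f := fun F => F \ {x, a, b}) (by
      intro F hF
      obtain ⟨hF, hxF⟩ := mem_filter.1 hF
      obtain ⟨c, hcx, h⟩ := hform F hF hxF
      by_cases hc : c = a ∨ c = b
      · have : F \ {x, a, b} = ∅ := by
          rw [sdiff_eq_empty_iff_subset]
          intro t ht
          simp only [mem_insert, mem_singleton]
          rcases h with ⟨-, rfl⟩ | ⟨-, rfl⟩ <;>
            simp only [mem_insert, mem_singleton] at ht <;> grind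
        simp [this]
      · push Not at hc
        have hcI : c ∈ Icc 1 n :=
          hsub F hF (by rcases h with ⟨-, rfl⟩ | ⟨-, rfl⟩ <;> simp)
        have : F \ {x, a, b} = {c} := by
          rcases h with ⟨-, rfl⟩ | ⟨-, rfl⟩ <;>
            exact hsd c _ hcx (by simp) hc.1 hc.2
        simp only [this, coe_insert, coe_image]
        exact Or.inr ⟨c, by simpa [hcx, hc.1, hc.2] using hcI, rfl⟩)
  obtain ⟨hF, hxF⟩ := mem_filter.1 hF
  obtain ⟨hG, hxG⟩ := mem_filter.1 hG
  obtain ⟨c, hcx, hc⟩ := hform F hF hxF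
  obtain ⟨d, hdx, hd⟩ := hform G hG hxG
  have hcd : ∀ t, t ≠ x → t ≠ a → t ≠ b → (t ∈ F ↔ t ∈ G) := by
    intro t h1 h2 h3
    simpa [h1, h2, h3] using congrArg (t ∈ ·) heq
  have hca := hcd c
  have hda := hcd d
  have hba : ({x, b, a} : Finset ℕ) = {x, a, b} := by rw [pair_comm]
  rcases hc with ⟨hc, rfl⟩ | ⟨hc, rfl⟩ <;> rcases hd with ⟨hd, rfl⟩ | ⟨hd, rfl⟩ <;>
    simp only [mem_insert, mem_singleton] at hca hda <;> grind

/-- If `x` lies in at least `n-1` members of `𝒻` and the singleton `{x}` is a witness of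
some member of `𝒻`, then at most `n - 4` elements `y` are such that the pair `{x, y}`
is a witness of some member of `𝒻`. -/
theorem stmt_8 (n : ℕ) (hn : 8 ≤ n) (𝒻 : Finset (Finset ℕ))
    (hsub : ∀ F ∈ 𝒻, F ⊆ Finset.Icc 1 n) (hcard : ∀ F ∈ 𝒻, F.card = 3)
    (x : ℕ) (hx : x ∈ Finset.Icc 1 n)
    (hdeg : n - 1 ≤ (𝒻.filter (fun F => x ∈ F)).card)
    (hwit : ∃ Fi ∈ 𝒻, x ∈ Fi ∧ ∀ G ∈ 𝒻, G ∩ Fi ≠ {x}) :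
    ((Finset.Icc 1 n).filter (fun y => y ≠ x ∧
        ∃ Fj ∈ 𝒻, {x, y} ⊆ Fj ∧ ∀ G ∈ 𝒻, G ∩ Fj ≠ ({x, y} : Finset ℕ))).card
      ≤ n - 4 := by
  obtain ⟨Fi, hFi, hxFi, hwit⟩ := hwit
  obtain ⟨a, b, hxa, hxb, hab, rfl⟩ := exists_eq_triple_of_mem (hcard Fi hFi) hxFi
  obtain ⟨c, hcx, hca, hcb, hac, hbc⟩ :=
    exists_common_completion (by omega) hsub hcard hxa hxb hab hFi hdeg hwit
  have hba : {x, b, a} ∈ 𝒻 := by rwa [pair_comm b a]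
  have hca' : {x, c, a} ∈ 𝒻 := by rwa [pair_comm c a]
  have hcb' : {x, c, b} ∈ 𝒻 := by rwa [pair_comm c b]
  have hquad : ({x, a, b, c} : Finset ℕ) ⊆ Icc 1 n := by
    intro t ht
    simp only [mem_insert, mem_singleton] at ht
    rcases ht with rfl | rfl | rfl | rfl
    · exact hx
    · exact hsub _ hFi (by simp)
    · exact hsub _ hFi (by simp)
    · exact hsub _ hac (by simp)
  have hquadcard : ({x, a, b, c} : Finset ℕ).card = 4 := by
    simp [hxa, hxb, hcx.symm, hab, hca.symm, hcb.symm]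
  calc _ ≤ (Icc 1 n \ {x, a, b, c}).card := card_le_card ?_
    _ = n - 4 := by rw [card_sdiff_of_subset hquad, hquadcard, Nat.card_Icc]; omega
  intro y hy
  obtain ⟨hyn, hyx, F, hF, hyF, hno⟩ := mem_filter.1 hy
  refine mem_sdiff.2 ⟨hyn, fun hmem => ?_⟩
  have hfree : ∀ u v, u ≠ v → {x, y, u} ∈ 𝒻 → {x, y, v} ∈ 𝒻 → False := by
    intro u v huv hu hv
    obtain ⟨G, hG, h⟩ := exists_inter_eq_pair hcard hyx.symm huv hu hv hF hyF
    exact hno G hG h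
  simp only [mem_insert, mem_singleton] at hmem
  rcases hmem with rfl | rfl | rfl | rfl
  · exact hyx rfl
  · exact hfree b c hcb.symm hFi hac
  · exact hfree a c hca.symm hba hbc
  · exact hfree a b hab hca' hcb'
end

section
/- Let n ≥ 8 and let 𝒻 be a family of 3-element subsets of [n] such that |𝒻(v)| ≥ n − 1 for every v ∈ [n]. Suppose {x, y, z} ∈ 𝒻 intersects every member of 𝒻. Then for every v ∈ [n] \ {x, y, z}, at most one of the pairs {v, x}, {v, y}, {v, z} is a witness of some member of 𝒻 (i.e., for at least two of these pairs P, there is no F ∈ 𝒻 with P ⊆ F and G ∩ F ≠ P for all G ∈ 𝒻). -/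
/-- The pair `P` is a witness of some member of `𝒻`. -/
def IsWitnessPair (𝒻 : Finset (Finset ℕ)) (P : Finset ℕ) : Prop :=
  ∃ F ∈ 𝒻, P ⊆ F ∧ ∀ G ∈ 𝒻, G ∩ F ≠ P

/-- A pair `P` of a `3`-uniform family that is a witness of some member is contained in only
one member. -/
theorem IsWitnessPair.card_filter_le_one {𝒻 : Finset (Finset ℕ)} {P : Finset ℕ}
    (hcard : ∀ F ∈ 𝒻, F.card = 3) (hP : P.card = 2) (h : IsWitnessPair 𝒻 P) :
    (𝒻.filter (fun F => P ⊆ F)).card ≤ 1 := by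
  obtain ⟨F, hF, hPF, hne⟩ := h
  have huniq : ∀ G ∈ 𝒻, P ⊆ G → G = F := by
    intro G hG hPG
    have hss : P ⊂ G ∩ F :=
      (Finset.subset_inter hPG hPF).ssubset_of_ne (hne G hG).symm
    have hlt := Finset.card_lt_card hss
    have hGF : G ∩ F = G :=
      Finset.eq_of_subset_of_card_le Finset.inter_subset_left (by rw [hcard G hG]; omega)
    exact Finset.eq_of_subset_of_card_le (Finset.inter_eq_left.1 hGF)
      (by rw [hcard G hG, hcard F hF])
  refine Finset.card_le_one.2 fun G hG H hH => ?_
  rw [Finset.mem_filter] at hG hH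
  rw [huniq G hG.1 hG.2, huniq H hH.1 hH.2]

/-- If `{a, b, c}` meets every member of a `3`-uniform family on `[n]` and both `{v, a}` and
`{v, b}` are witnesses, then `v` has degree less than `n - 1`. -/
theorem card_star_lt_of_isWitnessPair {n : ℕ} (hn : 8 ≤ n) {𝒻 : Finset (Finset ℕ)}
    (hsub : ∀ F ∈ 𝒻, F ⊆ Finset.Icc 1 n) (hcard : ∀ F ∈ 𝒻, F.card = 3)
    {a b c v : ℕ} (habc : ({a, b, c} : Finset ℕ) ∈ 𝒻)
    (htrans : ∀ F ∈ 𝒻, (({a, b, c} : Finset ℕ) ∩ F).Nonempty)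
    (hvn : v ∈ Finset.Icc 1 n) (hv : v ∉ ({a, b, c} : Finset ℕ))
    (ha : IsWitnessPair 𝒻 {v, a}) (hb : IsWitnessPair 𝒻 {v, b}) :
    (𝒻.filter (fun F => v ∈ F)).card < n - 1 := by
  have hva : v ≠ a := by rintro rfl; simp at hv
  have hvb : v ≠ b := by rintro rfl; simp at hv
  have hvc : v ≠ c := by rintro rfl; simp at hv
  set W := Finset.Icc 1 n \ insert v {a, b, c} with hW
  have hWcard : W.card = n - 4 := by
    rw [hW, Finset.card_sdiff_of_subset (Finset.insert_subset hvn (hsub _ habc)),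
      Finset.card_insert_of_notMem hv, hcard _ habc, Nat.card_Icc]
    rfl
  have hcover : 𝒻.filter (fun F => v ∈ F) ⊆
      (𝒻.filter (fun F => {v, a} ⊆ F) ∪ 𝒻.filter (fun F => {v, b} ⊆ F)) ∪
        W.image (fun w => {v, c, w}) := by
    intro F hF
    obtain ⟨hF, hvF⟩ := Finset.mem_filter.1 hF
    by_cases haF : a ∈ F
    · simp [hF, Finset.insert_subset_iff, hvF, haF]
    by_cases hbF : b ∈ F
    · simp [hF, Finset.insert_subset_iff, hvF, hbF]
    have hcF : c ∈ F := by
      obtain ⟨t, ht⟩ := htrans F hF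
      grind
    have hvcF : ({v, c} : Finset ℕ) ⊆ F := by simp [Finset.insert_subset_iff, hvF, hcF]
    obtain ⟨w, hw, rfl⟩ : ∃ w ∉ ({v, c} : Finset ℕ), insert w {v, c} = F :=
      (Finset.covBy_iff_card_sdiff_eq_one.2 ⟨hvcF, by
        rw [Finset.card_sdiff_of_subset hvcF, hcard F hF, Finset.card_pair hvc]⟩
        |> Finset.covBy_iff_exists_insert.1)
    refine Finset.mem_union_right _ (Finset.mem_image.2 ⟨w, ?_, by grind⟩)
    have hwn := hsub _ hF (Finset.mem_insert_self w _)
    grind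
  have hle := Finset.card_le_card hcover
  have hunion := Finset.card_union_le
    (𝒻.filter (fun F => {v, a} ⊆ F) ∪ 𝒻.filter (fun F => {v, b} ⊆ F))
    (W.image (fun w => ({v, c, w} : Finset ℕ)))
  have hunion' := Finset.card_union_le
    (𝒻.filter (fun F => {v, a} ⊆ F)) (𝒻.filter (fun F => {v, b} ⊆ F))
  have himage : (W.image (fun w => ({v, c, w} : Finset ℕ))).card ≤ W.card :=
    Finset.card_image_le
  have ha1 := ha.card_filter_le_one hcard (Finset.card_pair hva)
  have hb1 := hb.card_filter_le_one hcard (Finset.card_pair hvb)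
  omega

/-- Suppose every element of `[n]` has degree at least `n - 1` in `𝒻` and
`{x, y, z} ∈ 𝒻` intersects every member of `𝒻`.  Then for every
`v ∈ [n] \ {x, y, z}`, at most one of the pairs `{v,x}`, `{v,y}`, `{v,z}` is the
witness of some member of `𝒻`. -/
theorem stmt_13 (n : ℕ) (hn : 8 ≤ n) (𝒻 : Finset (Finset ℕ))
    (hsub : ∀ F ∈ 𝒻, F ⊆ Finset.Icc 1 n) (hcard : ∀ F ∈ 𝒻, F.card = 3)
    (hdeg : ∀ v ∈ Finset.Icc 1 n, n - 1 ≤ (𝒻.filter (fun F => v ∈ F)).card)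
    (x y z : ℕ) (hxyz : ({x, y, z} : Finset ℕ) ∈ 𝒻)
    (htrans : ∀ F ∈ 𝒻, (({x, y, z} : Finset ℕ) ∩ F).Nonempty) :
    ∀ v ∈ Finset.Icc 1 n \ ({x, y, z} : Finset ℕ),
      ¬ (IsWitnessPair 𝒻 {v, x} ∧ IsWitnessPair 𝒻 {v, y}) ∧
      ¬ (IsWitnessPair 𝒻 {v, x} ∧ IsWitnessPair 𝒻 {v, z}) ∧
      ¬ (IsWitnessPair 𝒻 {v, y} ∧ IsWitnessPair 𝒻 {v, z}) := by
  intro v hv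
  obtain ⟨hvn, hv⟩ := Finset.mem_sdiff.1 hv
  have hfalse : ∀ a b c : ℕ, ({x, y, z} : Finset ℕ) = {a, b, c} →
      ¬ (IsWitnessPair 𝒻 {v, a} ∧ IsWitnessPair 𝒻 {v, b}) := by
    rintro a b c habc ⟨ha, hb⟩
    rw [habc] at hxyz htrans hv
    have hlt := card_star_lt_of_isWitnessPair hn hsub hcard hxyz htrans hvn hv ha hb
    exact absurd (hdeg v hvn) (by omega)
  refine ⟨hfalse x y z rfl, hfalse x z y ?_, hfalse y z x ?_⟩ <;> grind
end

section
/- Let n ≥ 8 and let 𝒻 be a family of 3-element subsets of [n] such that |𝒻(v)| ≥ n − 1 for every v ∈ [n]. Suppose {x, y, z} ∈ 𝒻 intersects every member of 𝒻. Then it is impossible that for every u ∈ {x, y, z} there exists F_u ∈ 𝒻 with u ∈ F_u such that G ∩ F_u ≠ {u} for every G ∈ 𝒻; that is, at most two of the elements x, y, z can serve as singleton witnesses of members of 𝒻. -/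
/-- If `u ∈ T` is a singleton witness of a member of a 3-uniform family containing `T`, then a single
point `p ≠ u` meets every member of the family whose only element in `T` is `u`. -/
theorem exists_cover_of_singleton_witness {α : Type*} [DecidableEq α] {𝒻 : Finset (Finset α)}
    {T F : Finset α} {u : α} (hT : T ∈ 𝒻) (huT : u ∈ T) (hF : F.card = 3) (huF : u ∈ F)
    (hw : ∀ G ∈ 𝒻, G ∩ F ≠ {u}) :
    ∃ p, p ≠ u ∧ ∀ G ∈ 𝒻, u ∈ G → (∃ v ∈ T, v ≠ u ∧ v ∈ G) ∨ p ∈ G := by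
  have exists_other : ∀ G ∈ 𝒻, u ∈ G → ∃ v ∈ G, v ∈ F ∧ v ≠ u := by
    intro G hG huG
    by_contra! h
    refine hw G hG (Finset.eq_singleton_iff_unique_mem.2 ⟨Finset.mem_inter.2 ⟨huG, huF⟩, ?_⟩)
    intro v hv
    exact h v (Finset.mem_inter.1 hv).1 (Finset.mem_inter.1 hv).2
  obtain ⟨v, hvT, hvF, hvu⟩ := exists_other T hT huT
  have hcard : ((F.erase u).erase v).card = 1 := by
    rw [Finset.card_erase_of_mem (Finset.mem_erase.2 ⟨hvu, hvF⟩), Finset.card_erase_of_mem huF, hF]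
  obtain ⟨p, hp⟩ := Finset.card_eq_one.1 hcard
  have mem_iff : ∀ w, w ≠ v ∧ w ≠ u ∧ w ∈ F ↔ w = p := by
    intro w
    rw [← Finset.mem_singleton, ← hp, Finset.mem_erase, Finset.mem_erase]
  refine ⟨p, ((mem_iff p).2 rfl).2.1, fun G hG huG => ?_⟩
  obtain ⟨w, hwG, hwF, hwu⟩ := exists_other G hG huG
  by_cases hwv : w = v
  · exact Or.inl ⟨v, hvT, hvu, hwv ▸ hwG⟩
  · exact Or.inr ((mem_iff w).1 ⟨hwv, hwu, hwF⟩ ▸ hwG)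

/-- A 3-element set containing three distinct points consists of exactly those points. -/
theorem eq_triple_of_card_eq_three {α : Type*} [DecidableEq α] {G : Finset α} {a b c : α}
    (hG : G.card = 3) (ha : a ∈ G) (hb : b ∈ G) (hc : c ∈ G)
    (hab : a ≠ b) (hac : a ≠ c) (hbc : b ≠ c) : G = {a, b, c} := by
  symm
  apply Finset.eq_of_subset_of_card_le
  · simp [Finset.insert_subset_iff, ha, hb, hc]
  · rw [hG, Finset.card_eq_three.2 ⟨a, b, c, hab, hac, hbc, rfl⟩]

/-- Suppose every element of `[n]` has degree at least `n - 1` in `𝒻` and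
`{x, y, z} ∈ 𝒻` intersects every member of `𝒻`.  Then it is impossible that all
three of `x`, `y`, `z` serve as singleton witnesses of members of `𝒻`. -/
theorem stmt_14 (n : ℕ) (hn : 8 ≤ n) (𝒻 : Finset (Finset ℕ))
    (hsub : ∀ F ∈ 𝒻, F ⊆ Finset.Icc 1 n) (hcard : ∀ F ∈ 𝒻, F.card = 3)
    (hdeg : ∀ v ∈ Finset.Icc 1 n, n - 1 ≤ (𝒻.filter (fun F => v ∈ F)).card)
    (x y z : ℕ) (hxyz : ({x, y, z} : Finset ℕ) ∈ 𝒻)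
    (htrans : ∀ F ∈ 𝒻, (({x, y, z} : Finset ℕ) ∩ F).Nonempty) :
    ¬ (∀ u ∈ ({x, y, z} : Finset ℕ),
        ∃ F ∈ 𝒻, u ∈ F ∧ ∀ G ∈ 𝒻, G ∩ F ≠ ({u} : Finset ℕ)) := by
  intro h
  have exists_cover : ∀ u ∈ ({x, y, z} : Finset ℕ), ∃ p, p ≠ u ∧ ∀ G ∈ 𝒻, u ∈ G →
      (∃ v ∈ ({x, y, z} : Finset ℕ), v ≠ u ∧ v ∈ G) ∨ p ∈ G := by
    intro u hu
    obtain ⟨F, hF, huF, hw⟩ := h u hu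
    exact exists_cover_of_singleton_witness hxyz hu (hcard F hF) huF hw
  choose! p hpne hp using exists_cover
  obtain ⟨a, ha, haS⟩ : ∃ a ∈ Finset.Icc 1 n, a ∉ ({x, y, z, p x, p y, p z} : Finset ℕ) := by
    apply Finset.exists_mem_notMem_of_card_lt_card
    have := Finset.card_le_six (a := x) (b := y) (c := z) (d := p x) (e := p y) (f := p z)
    rw [Nat.card_Icc]
    omega
  simp only [Finset.mem_insert, Finset.mem_singleton, not_or] at haS
  obtain ⟨hax, hay, haz, hapx, hapy, hapz⟩ := haS
  have hsubset : 𝒻.filter (fun F => a ∈ F) ⊆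
      {{a, x, y}, {a, x, z}, {a, y, z}, {a, x, p x}, {a, y, p y}, {a, z, p z}} := by
    intro G hG
    obtain ⟨hG, haG⟩ := Finset.mem_filter.1 hG
    have triple : ∀ {b c : ℕ}, b ∈ G → c ∈ G → a ≠ b → a ≠ c → b ≠ c → G = {a, b, c} :=
      fun hb hc => eq_triple_of_card_eq_three (hcard G hG) haG hb hc
    obtain ⟨u, hu⟩ := htrans G hG
    obtain ⟨huT, huG⟩ := Finset.mem_inter.1 hu
    have hcov := hp u huT G hG huG
    have hne := hpne u huT
    simp only [Finset.mem_insert, Finset.mem_singleton] at huT hcov ⊢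
    grind
  have hle := (hdeg a ha).trans ((Finset.card_le_card hsubset).trans Finset.card_le_six)
  omega
end

section
/- Let n ≥ 8 and let 𝒻 be a family of 3-element subsets of [n] such that |𝒻(v)| ≥ n − 1 for every v ∈ [n]. Define 𝒞 := {F ∈ 𝒻 : F intersects every member of 𝒻, and for every nonempty proper subset B ⊊ F there exists G ∈ 𝒻 with G ∩ F = B}. If |𝒞| ≥ 4, then 𝒞 is not 2-intersecting; that is, there exist A, B ∈ 𝒞 with |A ∩ B| ≤ 1. -/
open Finset

/-- A family of triples through a common pair `P` is no larger than any triple `G` that is disjoint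
from `P` and meets all its members. -/
lemma card_le_three_of_common_pair {𝒞 : Finset (Finset ℕ)} {P G : Finset ℕ}
    (hP : P.card = 2) (hG : G.card = 3) (hPG : Disjoint P G)
    (hC : ∀ D ∈ 𝒞, D.card = 3 ∧ P ⊆ D ∧ (D ∩ G).Nonempty) : 𝒞.card ≤ 3 := by
  rw [← hG]
  refine (card_le_card fun D hD ↦ ?_).trans (card_image_le (s := G) (f := fun x ↦ insert x P))
  obtain ⟨h3, hPD, x, hx⟩ := hC D hD
  obtain ⟨hxD, hxG⟩ := mem_inter.1 hx
  have hxP : x ∉ P := fun h ↦ disjoint_left.1 hPG h hxG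
  refine mem_image.2 ⟨x, hxG, eq_of_subset_of_card_le (insert_subset hxD hPD) ?_⟩
  rw [card_insert_of_notMem hxP, h3, hP]

/-- If a family of triples meets every triple of a four-element set `U`, then at most six of its
members contain a given point outside `U`. -/
lemma degree_le_six_of_meets_triples {𝒻 : Finset (Finset ℕ)} {U : Finset ℕ} {v : ℕ}
    (hU : U.card = 4) (hv : v ∉ U) (hcard : ∀ F ∈ 𝒻, F.card = 3)
    (hmeet : ∀ T ∈ U.powersetCard 3, ∀ G ∈ 𝒻, (T ∩ G).Nonempty) :
    (𝒻.filter (fun F ↦ v ∈ F)).card ≤ 6 := by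
  have h6 : (U.powersetCard 2).card = 6 := by
    rw [card_powersetCard, hU]; rfl
  rw [← h6]
  refine card_le_card_of_injOn (fun F ↦ F.erase v) (fun G hG ↦ ?_) (fun G hG H hH h ↦ ?_)
  · obtain ⟨hG, hvG⟩ := mem_filter.1 hG
    have hc : (G.erase v).card = 2 := by rw [card_erase_of_mem hvG, hcard G hG]
    have hlt : (U \ G).card < 3 := by
      by_contra! h
      obtain ⟨T, hT, hT3⟩ := exists_subset_card_eq h
      obtain ⟨x, hx⟩ :=
        hmeet T (mem_powersetCard.2 ⟨hT.trans sdiff_subset, hT3⟩) G hG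
      obtain ⟨hxT, hxG⟩ := mem_inter.1 hx
      exact (mem_sdiff.1 (hT hxT)).2 hxG
    have hsplit := card_sdiff_add_card_inter U G
    have hsub : U ∩ G ⊆ G.erase v := fun x hx ↦ by
      obtain ⟨hxU, hxG⟩ := mem_inter.1 hx
      exact mem_erase.2 ⟨fun h ↦ hv (h ▸ hxU), hxG⟩
    have heq := eq_of_subset_of_card_le hsub (by omega)
    exact mem_coe.2 (mem_powersetCard.2 ⟨heq.symm.subset.trans inter_subset_left, hc⟩)
  · rw [← insert_erase (mem_filter.1 hG).2, ← insert_erase (mem_filter.1 hH).2]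
    exact congrArg (insert v) h

/-- Given triples `A`, `B` with `|A ∩ B| = 2` and a triple `D` not containing `A ∩ B` that shares
two points with each of them, any triple sharing two points with all three lies in `A ∪ B`. -/
lemma subset_union_of_two_le_card_inter {A B D E : Finset ℕ}
    (hAB : (A ∩ B).card = 2) (hD : D.card = 3) (hE : E.card = 3) (hDP : ¬ A ∩ B ⊆ D)
    (hAD : 2 ≤ (A ∩ D).card) (hBD : 2 ≤ (B ∩ D).card)
    (hAE : 2 ≤ (A ∩ E).card) (hBE : 2 ≤ (B ∩ E).card) (hDE : 2 ≤ (D ∩ E).card) :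
    E ⊆ A ∪ B := by
  have key : ∀ X : Finset ℕ, ((A ∪ B) ∩ X).card + ((A ∩ B) ∩ X).card =
      (A ∩ X).card + (B ∩ X).card := fun X ↦ by
    rw [union_inter_distrib_right, inter_inter_distrib_right, card_union_add_card_inter]
  have sub_of_card : ∀ X : Finset ℕ, X.card = 3 → 3 ≤ ((A ∪ B) ∩ X).card → X ⊆ A ∪ B :=
    fun X hX h ↦ inter_eq_right.1 (eq_of_subset_of_card_le inter_subset_right (hX ▸ h))
  have hlt : ((A ∩ B) ∩ D).card < 2 := by
    rw [← hAB]
    exact card_lt_card (inter_subset_left.ssubset_of_ne fun h ↦ hDP (inter_eq_left.1 h))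
  have hDU : D ⊆ A ∪ B := sub_of_card D hD (by have := key D; omega)
  by_contra hEU
  have hE2 : ((A ∪ B) ∩ E).card < 3 := by
    by_contra! h
    exact hEU (sub_of_card E hE h)
  have hPE : (A ∩ B) ∩ E = A ∩ B :=
    eq_of_subset_of_card_le inter_subset_left (by have := key E; omega)
  have hPU : (A ∩ B) ∩ E = (A ∪ B) ∩ E :=
    eq_of_subset_of_card_le
      (inter_subset_inter_right (inter_subset_left.trans subset_union_left))
      (by have := key E; omega)
  have hDEU : D ∩ E = (A ∪ B) ∩ E :=
    eq_of_subset_of_card_le (inter_subset_inter_right hDU) (by omega)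
  exact hDP (hPE ▸ hPU ▸ hDEU ▸ inter_subset_left)


/-- Suppose every element of `[n]` has degree at least `n - 1` in `𝒻`, and let `𝒞` be
the subfamily of members `F` of `𝒻` that intersect every member of `𝒻` and such that
every nonempty proper subset of `F` is realized as an intersection with some member
of `𝒻`.  If `|𝒞| ≥ 4`, then `𝒞` is not 2-intersecting. -/
theorem stmt_15 (n : ℕ) (hn : 8 ≤ n) (𝒻 : Finset (Finset ℕ))
    (hsub : ∀ F ∈ 𝒻, F ⊆ Finset.Icc 1 n) (hcard : ∀ F ∈ 𝒻, F.card = 3)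
    (hdeg : ∀ v ∈ Finset.Icc 1 n, n - 1 ≤ (𝒻.filter (fun F => v ∈ F)).card)
    (𝒞 : Finset (Finset ℕ))
    (h𝒞 : ∀ F : Finset ℕ, F ∈ 𝒞 ↔ F ∈ 𝒻 ∧
      (∀ G ∈ 𝒻, (F ∩ G).Nonempty) ∧
      (∀ B : Finset ℕ, B ⊂ F → B.Nonempty → ∃ G ∈ 𝒻, G ∩ F = B))
    (hbig : 4 ≤ 𝒞.card) :
    ∃ A ∈ 𝒞, ∃ B ∈ 𝒞, (A ∩ B).card ≤ 1 := by
  by_contra! h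
  have h3 : ∀ F ∈ 𝒞, F.card = 3 := fun F hF ↦ hcard F ((h𝒞 F).1 hF).1
  obtain ⟨A, hA, B, hB, hne⟩ := one_lt_card.1 (show 1 < 𝒞.card by omega)
  have hAB : (A ∩ B).card = 2 := by
    have hlt : (A ∩ B).card < 3 := by
      rw [← h3 A hA]
      refine card_lt_card (inter_subset_left.ssubset_of_ne fun h' ↦ hne ?_)
      exact eq_of_subset_of_card_le (inter_eq_left.1 h') (by rw [h3 A hA, h3 B hB])
    have := h A hA B hB
    omega
  by_cases hP : ∀ D ∈ 𝒞, A ∩ B ⊆ D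
  · have hdiff : (A \ B).card = 1 := by
      have := card_sdiff_add_card_inter A B
      have := h3 A hA
      omega
    have hss : A \ B ⊂ A := sdiff_subset.ssubset_of_ne fun h' ↦ by
      have := h3 A hA
      rw [h'] at hdiff
      omega
    obtain ⟨G, hG, hGA⟩ := ((h𝒞 A).1 hA).2.2 _ hss (card_pos.1 (by omega))
    have hdisj : Disjoint (A ∩ B) G := disjoint_left.2 fun x hx hxG ↦ by
      obtain ⟨hxA, hxB⟩ := mem_inter.1 hx
      exact (mem_sdiff.1 (hGA ▸ mem_inter.2 ⟨hxG, hxA⟩)).2 hxB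
    have := card_le_three_of_common_pair hAB (hcard G hG) hdisj
      fun D hD ↦ ⟨h3 D hD, hP D hD, ((h𝒞 D).1 hD).2.1 G hG⟩
    omega
  · push Not at hP
    obtain ⟨D, hD, hDP⟩ := hP
    have hU : (A ∪ B).card = 4 := by
      have := card_union_add_card_inter A B
      have := h3 A hA
      have := h3 B hB
      omega
    have hsubU : 𝒞 ⊆ (A ∪ B).powersetCard 3 := fun E hE ↦
      mem_powersetCard.2 ⟨subset_union_of_two_le_card_inter hAB (h3 D hD) (h3 E hE) hDP
        (h A hA D hD) (h B hB D hD) (h A hA E hE) (h B hB E hE) (h D hD E hE), h3 E hE⟩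
    have hCU := eq_of_subset_of_card_le hsubU (by
      rw [card_powersetCard, hU]
      exact hbig)
    obtain ⟨v, hv, hvU⟩ := exists_mem_notMem_of_card_lt_card
      (show (A ∪ B).card < (Icc 1 n).card by rw [hU, Nat.card_Icc]; omega)
    have := degree_le_six_of_meets_triples hU hvU hcard
      fun T hT G hG ↦ ((h𝒞 T).1 (hCU ▸ hT)).2.1 G hG
    have := hdeg v hv
    omega
end

section
/- Let n ≥ 8 and let 𝒻 be a family of 3-element subsets of [n] such that |𝒻(v)| ≥ n − 1 for every v ∈ [n]. Then there do not exist six distinct elements a, b, c, x, y, z ∈ [n] such that {a, x, b}, {b, z, c}, {a, y, c} ∈ 𝒻 and each of these three sets intersects every member of 𝒻. (In other words, the subfamily of members of 𝒻 that are transversals of 𝒻 contains no linear triangle.) -/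
/-- A 3-element set is determined by any three distinct elements of it. -/
theorem Finset.eq_triple_of_mem_of_card_eq_three {α : Type*} [DecidableEq α] {F : Finset α}
    (hF : F.card = 3) {u v w : α} (hu : u ∈ F) (hv : v ∈ F) (hw : w ∈ F)
    (huv : u ≠ v) (huw : u ≠ w) (hvw : v ≠ w) : F = {u, v, w} := by
  refine (Finset.eq_of_subset_of_card_le (by grind) ?_).symm
  rw [hF, Finset.card_eq_three.2 ⟨u, v, w, huv, huw, hvw, rfl⟩]

/-- A 3-element set meeting every edge of a linear triangle and containing a vertex `v` outside it
is `v` together with one of six pairs. -/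
theorem Finset.mem_of_meets_linear_triangle {α : Type*} [DecidableEq α] {a b c x y z v : α}
    (h6 : ({a, b, c, x, y, z} : Finset α).card = 6)
    (hv : v ∉ ({a, b, c, x, y, z} : Finset α)) {F : Finset α} (hF : F.card = 3) (hvF : v ∈ F)
    (h₁ : (({a, x, b} : Finset α) ∩ F).Nonempty) (h₂ : (({b, z, c} : Finset α) ∩ F).Nonempty)
    (h₃ : (({a, y, c} : Finset α) ∩ F).Nonempty) :
    F ∈ ({{v, a, b}, {v, b, c}, {v, a, c}, {v, a, z}, {v, b, y}, {v, c, x}} :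
      Finset (Finset α)) := by
  have hnd : [a, b, c, x, y, z].Nodup := by
    rw [← Multiset.coe_nodup, ← Multiset.toFinset_card_eq_card_iff_nodup]
    simpa using h6
  simp only [List.nodup_cons, List.mem_cons, List.not_mem_nil, not_or] at hnd
  simp only [Finset.mem_insert, Finset.mem_singleton, not_or] at hv
  have pair : ∀ p q : α, v ≠ p → v ≠ q → p ≠ q → p ∈ F → q ∈ F → F = {v, p, q} :=
    fun p q hp hq hpq hpF hqF =>
      Finset.eq_triple_of_mem_of_card_eq_three hF hvF hpF hqF hp hq hpq
  have hxyz : ¬ (x ∈ F ∧ y ∈ F ∧ z ∈ F) := by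
    rintro ⟨hx, hy, hz⟩
    have := pair x y (by grind) (by grind) (by grind) hx hy
    grind
  have hab := pair a b (by grind) (by grind) (by grind)
  have hbc := pair b c (by grind) (by grind) (by grind)
  have hac := pair a c (by grind) (by grind) (by grind)
  have haz := pair a z (by grind) (by grind) (by grind)
  have hby := pair b y (by grind) (by grind) (by grind)
  have hcx := pair c x (by grind) (by grind) (by grind)
  have meets : ∀ p q r : α, (({p, q, r} : Finset α) ∩ F).Nonempty → p ∈ F ∨ q ∈ F ∨ r ∈ F := by
    rintro p q r ⟨t, ht⟩
    grind
  have m₁ := meets _ _ _ h₁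
  have m₂ := meets _ _ _ h₂
  have m₃ := meets _ _ _ h₃
  clear pair meets h₁ h₂ h₃ hnd hv h6
  simp only [Finset.mem_insert, Finset.mem_singleton]
  by_cases ha : a ∈ F <;> by_cases hb : b ∈ F <;> by_cases hc : c ∈ F <;> simp_all

/-- Suppose every element of `[n]` has degree at least `n - 1` in `𝒻`.  Then there do
not exist six distinct elements `a, b, c, x, y, z ∈ [n]` such that `{a,x,b}`,
`{b,z,c}`, `{a,y,c}` all belong to `𝒻` and each intersects every member of `𝒻`:
the subfamily of transversal members of `𝒻` contains no linear triangle. -/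
theorem stmt_16 (n : ℕ) (hn : 8 ≤ n) (𝒻 : Finset (Finset ℕ))
    (hsub : ∀ F ∈ 𝒻, F ⊆ Finset.Icc 1 n) (hcard : ∀ F ∈ 𝒻, F.card = 3)
    (hdeg : ∀ v ∈ Finset.Icc 1 n, n - 1 ≤ (𝒻.filter (fun F => v ∈ F)).card) :
    ¬ ∃ a b c x y z : ℕ,
        a ∈ Finset.Icc 1 n ∧ b ∈ Finset.Icc 1 n ∧ c ∈ Finset.Icc 1 n ∧
        x ∈ Finset.Icc 1 n ∧ y ∈ Finset.Icc 1 n ∧ z ∈ Finset.Icc 1 n ∧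
        ({a, b, c, x, y, z} : Finset ℕ).card = 6 ∧
        ({a, x, b} : Finset ℕ) ∈ 𝒻 ∧ ({b, z, c} : Finset ℕ) ∈ 𝒻 ∧
        ({a, y, c} : Finset ℕ) ∈ 𝒻 ∧
        (∀ F ∈ 𝒻, (({a, x, b} : Finset ℕ) ∩ F).Nonempty) ∧
        (∀ F ∈ 𝒻, (({b, z, c} : Finset ℕ) ∩ F).Nonempty) ∧
        (∀ F ∈ 𝒻, (({a, y, c} : Finset ℕ) ∩ F).Nonempty) := by
  rintro ⟨a, b, c, x, y, z, -, -, -, -, -, -, h6, -, -, -, h₁, h₂, h₃⟩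
  obtain ⟨v, hv, hvT⟩ : ∃ v ∈ Finset.Icc 1 n, v ∉ ({a, b, c, x, y, z} : Finset ℕ) := by
    refine Finset.exists_mem_notMem_of_card_lt_card ?_
    rw [h6, Nat.card_Icc]
    omega
  have hle : (𝒻.filter (fun F => v ∈ F)).card ≤ 6 := by
    refine le_trans (Finset.card_le_card fun F hF => ?_) (Finset.card_le_six
      (a := {v, a, b}) (b := {v, b, c}) (c := {v, a, c}) (d := {v, a, z}) (e := {v, b, y})
      (f := {v, c, x}))
    obtain ⟨hF, hvF⟩ := Finset.mem_filter.1 hF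
    exact Finset.mem_of_meets_linear_triangle h6 hvT (hcard F hF) hvF
      (h₁ F hF) (h₂ F hF) (h₃ F hF)
  have := hdeg v hv
  omega
end

section
/- Let 𝒻 be a family of 3-element subsets of [n] and let 𝒞 ⊆ 𝒻 be a nonempty subfamily each of whose members intersects every member of 𝒻. If no subset of [n] of size at most 2 intersects every member of 𝒞, then |𝒻| ≤ 19. -/
/-- If `𝒞` has no transversal of size at most 2, then at most `2 ^ (3 - |X|)` of the 3-element
transversals of `𝒞` contain `X` and meet `A` only inside `X`, where `A` is a set that meets every
member of `𝒞`. -/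
theorem card_filter_superset_le {α : Type*} [DecidableEq α] {𝒻 𝒞 : Finset (Finset α)}
    {A : Finset α} (hcard : ∀ F ∈ 𝒻, F.card = 3) (hcard𝒞 : ∀ C ∈ 𝒞, C.card = 3)
    (htrans : ∀ C ∈ 𝒞, ∀ F ∈ 𝒻, (C ∩ F).Nonempty) (hA : ∀ C ∈ 𝒞, (C ∩ A).Nonempty)
    (htau : ∀ T : Finset α, T.card ≤ 2 → ∃ C ∈ 𝒞, Disjoint C T) (k : ℕ) (X : Finset α)
    (hX : X.card + k = 3) :
    (𝒻.filter fun F => X ⊆ F ∧ A ∩ F ⊆ X).card ≤ 2 ^ k := by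
  induction k generalizing X with
  | zero =>
    refine Finset.card_le_one.2 fun F hF G hG => ?_
    simp only [Finset.mem_filter] at hF hG
    rw [← Finset.eq_of_subset_of_card_le hF.2.1 (by have := hcard F hF.1; omega),
      ← Finset.eq_of_subset_of_card_le hG.2.1 (by have := hcard G hG.1; omega)]
  | succ k ih =>
    obtain ⟨C, hC, hCX⟩ := htau X (by omega)
    have hCA : (C \ A).card ≤ 2 := by
      have h₁ := Finset.card_sdiff_add_card_inter C A
      have h₂ := (hA C hC).card_pos
      have h₃ := hcard𝒞 C hC
      omega
    have hcover : (𝒻.filter fun F => X ⊆ F ∧ A ∩ F ⊆ X) ⊆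
        (C \ A).biUnion fun v => 𝒻.filter fun F => insert v X ⊆ F ∧ A ∩ F ⊆ insert v X := by
      intro F hF
      obtain ⟨hF𝒻, hXF, hAF⟩ := Finset.mem_filter.1 hF
      obtain ⟨v, hv⟩ := htrans C hC F hF𝒻
      obtain ⟨hvC, hvF⟩ := Finset.mem_inter.1 hv
      have hvA : v ∉ A := fun h =>
        Finset.disjoint_left.1 hCX hvC (hAF (Finset.mem_inter.2 ⟨h, hvF⟩))
      exact Finset.mem_biUnion.2 ⟨v, Finset.mem_sdiff.2 ⟨hvC, hvA⟩, Finset.mem_filter.2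
        ⟨hF𝒻, Finset.insert_subset hvF hXF, hAF.trans (Finset.subset_insert v X)⟩⟩
    calc _ ≤ _ := Finset.card_le_card hcover
      _ ≤ (C \ A).card * 2 ^ k := Finset.card_biUnion_le_card_mul _ _ _ fun v hv => ih _ (by
          rw [Finset.card_insert_of_notMem
            (Finset.disjoint_left.1 hCX (Finset.mem_sdiff.1 hv).1)]
          omega)
      _ ≤ 2 * 2 ^ k := Nat.mul_le_mul_right _ hCA
      _ = 2 ^ (k + 1) := by ring

/-- Let `𝒻` be a family of 3-element subsets of `[n]` and `𝒞 ⊆ 𝒻` a nonempty subfamily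
each of whose members intersects every member of `𝒻`.  If no subset of `[n]` of size at
most 2 intersects every member of `𝒞` (i.e. `τ(𝒞) = 3`), then `|𝒻| ≤ 19`. -/
theorem stmt_17 (n : ℕ) (𝒻 𝒞 : Finset (Finset ℕ))
    (hsub : ∀ F ∈ 𝒻, F ⊆ Finset.Icc 1 n) (hcard : ∀ F ∈ 𝒻, F.card = 3)
    (h𝒞sub : 𝒞 ⊆ 𝒻) (h𝒞ne : 𝒞.Nonempty)
    (htrans : ∀ C ∈ 𝒞, ∀ F ∈ 𝒻, (C ∩ F).Nonempty)
    (htau : ∀ T ⊆ Finset.Icc 1 n, T.card ≤ 2 → ∃ C ∈ 𝒞, C ∩ T = ∅) :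
    𝒻.card ≤ 19 := by
  have hdisj : ∀ T : Finset ℕ, T.card ≤ 2 → ∃ C ∈ 𝒞, Disjoint C T := by
    intro T hT
    obtain ⟨C, hC, hCT⟩ := htau (T ∩ Finset.Icc 1 n) Finset.inter_subset_right
      ((Finset.card_le_card Finset.inter_subset_left).trans hT)
    refine ⟨C, hC, Finset.disjoint_left.2 fun v hvC hvT => ?_⟩
    have hv : v ∈ C ∩ (T ∩ Finset.Icc 1 n) := Finset.mem_inter.2
      ⟨hvC, Finset.mem_inter.2 ⟨hvT, hsub C (h𝒞sub hC) hvC⟩⟩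
    simp [hCT] at hv
  obtain ⟨A, hA⟩ := h𝒞ne
  have hA3 : A.card = 3 := hcard A (h𝒞sub hA)
  calc 𝒻.card = ∑ S ∈ A.powerset, (𝒻.filter fun F => A ∩ F = S).card :=
        Finset.card_eq_sum_card_fiberwise fun F _ =>
          Finset.mem_coe.2 (Finset.mem_powerset.2 Finset.inter_subset_left)
    _ ≤ ∑ S ∈ A.powerset, (if S.card = 0 then 0 else 2 ^ (3 - S.card)) := by
        refine Finset.sum_le_sum fun S hS => ?_
        rcases S.eq_empty_or_nonempty with rfl | hne
        · simpa using fun F hF => (htrans A hA F hF).ne_empty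
        · have hS3 := Finset.card_le_card (Finset.mem_powerset.1 hS)
          simp only [hne.card_pos.ne', if_false]
          refine le_trans (Finset.card_le_card ?_)
            (card_filter_superset_le (A := A) hcard (fun C hC => hcard C (h𝒞sub hC)) htrans
              (fun C hC => htrans C hC A (h𝒞sub hA)) hdisj (3 - S.card) S (by omega))
          refine Finset.monotone_filter_right _ fun F _ hF => ?_
          exact ⟨hF ▸ Finset.inter_subset_right, hF.subset⟩
    _ = 19 := by
        rw [Finset.sum_powerset_apply_card (fun m => if m = 0 then 0 else 2 ^ (3 - m)), hA3]
        decide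
end
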